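/- arXiv:2411.03955 — 8 statements merged into one kernel-verified Lean document; each statement's English description precedes it below -/
import Mathlib

section
/- (Theorem 1, upper tail.) Let n ≥ k ≥ 1 and weights w^1,…,w^n ∈ [0,1/k] with Σ_{i=1}^n w^i = 1. Let (X_t)_{t=0,…,T} be a martingale with values in Δ := {x ∈ [0,1]^n : Σ_{i=1}^n x^i = k}, adapted to a filtration (F_t), with X_0 = k·w almost surely, X_T ∈ {0,1}^n almost surely, and such that for every t ≥ 1, almost surely the difference X_t − X_{t−1} vanishes in all but at most two coordinates. Then for every subset A ⊆ {1,…,n} and every δ > 0, setting α := Σ_{i∈A} w^i and η := α − k·Σ_{i∈A} (w^i)², one has P[(1/k)·Σ_{i∈A} X_T^i ≥ α + δ] ≤ π(η, δ, k). -/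
open MeasureTheory ProbabilityTheory Real

/-- `π(η,δ,k) := ((η/(η+δ))^(η+δ) · exp δ)^k`, where the inner power is a real power. -/
noncomputable def piBound (η δ : ℝ) (k : ℕ) : ℝ :=
  ((η / (η + δ)) ^ (η + δ) * Real.exp δ) ^ k

/-! For `l ≥ 0` and `c = exp l - 1`, convexity gives `exp (l ∑ x_i) ≤ ∏ (1 + c x_i)` on `[0,1]^A`.
The right-hand side is multi-affine, so along a step of the martingale its expectation only feels
products of increments of distinct coordinates; these are nonpositive because the only two
coordinates that move do so in opposite directions. Hence the moment generating function of
`∑ i ∈ A, X_T^i` is at most that of a sum of independent Bernoulli variables of parameters `X_0^i`,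
and Chernoff's method yields Bennett's inequality. -/

section NegativeIncrements

variable {ι R : Type*}

lemma pairwise_mul_sub_nonpos_of_sum_eq [Fintype ι] [CommRing R] [LinearOrder R]
    [IsStrictOrderedRing R] {x y : ι → R} (hsum : ∑ l, x l = ∑ l, y l) {i j : ι}
    (hij : ∀ l, l ≠ i → l ≠ j → y l = x l) :
    Pairwise fun l m => (y l - x l) * (y m - x m) ≤ 0 := by
  intro l m hlm
  by_cases hl : y l = x l
  · simp [hl]
  by_cases hm : y m = x m
  · simp [hm]
  have hl_pair : l = i ∨ l = j := by grind
  have hm_pair : m = i ∨ m = j := by grind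
  have hfixed : ∀ a, a ≠ l ∧ a ≠ m → y a - x a = 0 := by
    rintro a ⟨hal, ham⟩
    exact sub_eq_zero.2 (hij a (by grind) (by grind))
  have hopp : (y l - x l) + (y m - x m) = 0 := by
    rw [← Fintype.sum_eq_add (f := fun a => y a - x a) l m hlm hfixed, Finset.sum_sub_distrib,
      hsum, sub_self]
  rw [eq_neg_of_add_eq_zero_left hopp, neg_mul, neg_nonpos]
  exact mul_self_nonneg _

lemma prod_le_prod_add_sum_sub_mul_prod_erase [DecidableEq ι] [CommRing R] [PartialOrder R]
    [IsOrderedRing R] {s : Finset ι} {x y : ι → R} (hx : ∀ i ∈ s, 0 ≤ x i) (hy : ∀ i ∈ s, 0 ≤ y i)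
    (hxy : (s : Set ι).Pairwise fun i j => (y i - x i) * (y j - x j) ≤ 0) :
    ∏ i ∈ s, y i ≤ ∏ i ∈ s, x i + ∑ i ∈ s, (∏ j ∈ s.erase i, x j) * (y i - x i) := by
  induction s using Finset.induction_on with
  | empty => simp
  | insert a s ha ih =>
    simp only [Finset.mem_insert, forall_eq_or_imp] at hx hy
    have hcross : (y a - x a) * ∑ i ∈ s, (∏ j ∈ s.erase i, x j) * (y i - x i) ≤ 0 := by
      rw [Finset.mul_sum]
      refine Finset.sum_nonpos fun i hi => ?_
      rw [mul_left_comm]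
      refine mul_nonpos_of_nonneg_of_nonpos
        (Finset.prod_nonneg fun j hj => hx.2 j (Finset.mem_of_mem_erase hj)) ?_
      exact hxy (by simp) (by simp [hi]) (ne_of_mem_of_not_mem hi ha).symm
    have herase : ∀ i ∈ s, (∏ j ∈ (insert a s).erase i, x j) * (y i - x i) =
        x a * ((∏ j ∈ s.erase i, x j) * (y i - x i)) := fun i hi => by
      rw [Finset.erase_insert_of_ne (ne_of_mem_of_not_mem hi ha).symm,
        Finset.prod_insert (fun h => ha (Finset.mem_of_mem_erase h)), mul_assoc]
    rw [Finset.prod_insert ha, Finset.prod_insert ha, Finset.sum_insert ha,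
      Finset.erase_insert ha, Finset.sum_congr rfl herase, ← Finset.mul_sum]
    calc y a * ∏ i ∈ s, y i
        ≤ y a * (∏ i ∈ s, x i + ∑ i ∈ s, (∏ j ∈ s.erase i, x j) * (y i - x i)) :=
          mul_le_mul_of_nonneg_left (ih hx.2 hy.2 (hxy.mono (by simp))) hy.1
      _ = x a * ∏ i ∈ s, x i + ((∏ i ∈ s, x i) * (y a - x a) +
            x a * ∑ i ∈ s, (∏ j ∈ s.erase i, x j) * (y i - x i)) +
          (y a - x a) * ∑ i ∈ s, (∏ j ∈ s.erase i, x j) * (y i - x i) := by ring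
      _ ≤ _ := add_le_of_nonpos_right hcross

end NegativeIncrements

section ProductsOfMartingales

variable {Ω ι τ : Type*} {m0 : MeasurableSpace Ω} {μ : Measure Ω} [IsFiniteMeasure μ]

lemma norm_prod_le_pow_card {s : Finset ι} {x : ι → ℝ} {K : ℝ} (hx : ∀ i ∈ s, x i ∈ Set.Icc 0 K) :
    ‖∏ i ∈ s, x i‖ ≤ K ^ s.card := by
  rw [_root_.norm_prod, ← Finset.prod_const]
  refine Finset.prod_le_prod (fun i _ => norm_nonneg _) fun i hi => ?_
  rw [Real.norm_of_nonneg (hx i hi).1]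
  exact (hx i hi).2

lemma integral_mul_sub_eq_zero_of_martingale [Preorder τ] {ℱ : Filtration τ m0} {M : τ → Ω → ℝ}
    (hM : Martingale M ℱ μ) {t u : τ} (htu : t ≤ u) {H : Ω → ℝ} (hH : StronglyMeasurable[ℱ t] H)
    {K : ℝ} (hK : ∀ᵐ ω ∂μ, ‖H ω‖ ≤ K) :
    ∫ ω, H ω * (M u ω - M t ω) ∂μ = 0 := by
  have hincr : μ[M u - M t | ℱ t] =ᵐ[μ] 0 := by
    filter_upwards [condExp_sub (hM.integrable u) (hM.integrable t) (ℱ t), hM.condExp_ae_eq htu,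
      hM.condExp_ae_eq le_rfl] with ω hsub hu ht
    rw [hsub, Pi.sub_apply, hu, ht, sub_self, Pi.zero_apply]
  have hcond : μ[H * (M u - M t) | ℱ t] =ᵐ[μ] 0 := by
    filter_upwards [condExp_stronglyMeasurable_mul_of_bound (ℱ.le t) hH
      ((hM.integrable u).sub (hM.integrable t)) K hK, hincr] with ω hpull hzero
    rw [hpull, Pi.mul_apply, hzero, Pi.zero_apply, mul_zero]
  calc ∫ ω, H ω * (M u ω - M t ω) ∂μ = ∫ ω, (μ[H * (M u - M t) | ℱ t]) ω ∂μ :=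
        (integral_condExp (ℱ.le t)).symm
    _ = 0 := integral_eq_zero_of_ae hcond

lemma integrable_prod_of_mem_Icc {f : ι → Ω → ℝ} (hf : ∀ i, AEStronglyMeasurable (f i) μ) {K : ℝ}
    (hK : ∀ᵐ ω ∂μ, ∀ i, f i ω ∈ Set.Icc 0 K) (s : Finset ι) :
    Integrable (fun ω => ∏ i ∈ s, f i ω) μ :=
  .of_bound (Finset.aestronglyMeasurable_fun_prod s fun i _ => hf i) (K ^ s.card)
    (hK.mono fun _ h => norm_prod_le_pow_card fun i _ => h i)

lemma integral_prod_le_integral_prod_of_martingale [Preorder τ] {ℱ : Filtration τ m0}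
    {M : ι → τ → Ω → ℝ} (hM : ∀ i, Martingale (M i) ℱ μ) {t u : τ} (htu : t ≤ u) {K : ℝ}
    (ht : ∀ᵐ ω ∂μ, ∀ i, M i t ω ∈ Set.Icc 0 K) (hu : ∀ᵐ ω ∂μ, ∀ i, M i u ω ∈ Set.Icc 0 K)
    (hneg : ∀ᵐ ω ∂μ, Pairwise fun i j => (M i u ω - M i t ω) * (M j u ω - M j t ω) ≤ 0)
    (s : Finset ι) :
    ∫ ω, ∏ i ∈ s, M i u ω ∂μ ≤ ∫ ω, ∏ i ∈ s, M i t ω ∂μ := by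
  classical
  let H (i : ι) (ω : Ω) : ℝ := ∏ j ∈ s.erase i, M j t ω
  have hH_meas (i : ι) : StronglyMeasurable[ℱ t] (H i) :=
    Finset.stronglyMeasurable_fun_prod _ fun j _ => (hM j).stronglyMeasurable t
  have hH_bound (i : ι) : ∀ᵐ ω ∂μ, ‖H i ω‖ ≤ K ^ (s.erase i).card :=
    ht.mono fun _ h => norm_prod_le_pow_card fun j _ => h j
  have hint_prod {v : τ} (hv : ∀ᵐ ω ∂μ, ∀ i, M i v ω ∈ Set.Icc 0 K) :
      Integrable (fun ω => ∏ i ∈ s, M i v ω) μ :=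
    integrable_prod_of_mem_Icc (fun i => ((hM i).integrable v).aestronglyMeasurable) hv s
  have hint_incr (i : ι) : Integrable (fun ω => H i ω * (M i u ω - M i t ω)) μ :=
    (((hM i).integrable u).sub ((hM i).integrable t)).bdd_mul
      ((hH_meas i).mono (ℱ.le t)).aestronglyMeasurable (hH_bound i)
  have hint_sum : Integrable (fun ω => ∑ i ∈ s, H i ω * (M i u ω - M i t ω)) μ :=
    integrable_finsetSum s fun i _ => hint_incr i
  calc ∫ ω, ∏ i ∈ s, M i u ω ∂μ
      ≤ ∫ ω, (∏ i ∈ s, M i t ω + ∑ i ∈ s, H i ω * (M i u ω - M i t ω)) ∂μ := by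
        refine integral_mono_ae (hint_prod hu) ((hint_prod ht).add hint_sum) ?_
        filter_upwards [ht, hu, hneg] with ω ht hu hneg
        exact prod_le_prod_add_sum_sub_mul_prod_erase (fun i _ => (ht i).1) (fun i _ => (hu i).1)
          (hneg.set_pairwise s)
    _ = ∫ ω, ∏ i ∈ s, M i t ω ∂μ := by
        rw [integral_add (hint_prod ht) hint_sum, integral_finsetSum s fun i _ => hint_incr i,
          Finset.sum_eq_zero fun i _ =>
            integral_mul_sub_eq_zero_of_martingale (hM i) htu (hH_meas i) (hH_bound i), add_zero]

lemma integral_prod_le_integral_prod_zero_of_martingale {ℱ : Filtration ℕ m0} {M : ι → ℕ → Ω → ℝ}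
    (hM : ∀ i, Martingale (M i) ℱ μ) {T : ℕ} {K : ℝ}
    (hmem : ∀ t ≤ T, ∀ᵐ ω ∂μ, ∀ i, M i t ω ∈ Set.Icc 0 K)
    (hneg : ∀ t < T, ∀ᵐ ω ∂μ,
      Pairwise fun i j => (M i (t + 1) ω - M i t ω) * (M j (t + 1) ω - M j t ω) ≤ 0)
    (s : Finset ι) :
    ∫ ω, ∏ i ∈ s, M i T ω ∂μ ≤ ∫ ω, ∏ i ∈ s, M i 0 ω ∂μ := by
  induction T with
  | zero => exact le_rfl
  | succ T ih =>
    exact (integral_prod_le_integral_prod_of_martingale hM T.le_succ (hmem T T.le_succ)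
      (hmem (T + 1) le_rfl) (hneg T T.lt_succ_self) s).trans
      (ih (fun t ht => hmem t (ht.trans T.le_succ)) fun t ht => hneg t (ht.trans T.lt_succ_self))

end ProductsOfMartingales

section Bennett

lemma exp_mul_le_one_add_mul_exp_sub_one {x : ℝ} (hx : x ∈ Set.Icc (0 : ℝ) 1) (l : ℝ) :
    exp (l * x) ≤ 1 + (exp l - 1) * x := by
  have h := convexOn_exp.2 (Set.mem_univ 0) (Set.mem_univ l) (sub_nonneg.2 hx.2) hx.1
    (sub_add_cancel 1 x)
  simp only [smul_eq_mul, mul_zero, zero_add, exp_zero, mul_one] at h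
  rw [mul_comm]
  linarith

lemma one_add_exp_sub_one_mul_le_exp {p : ℝ} (hp : p ≤ 1) {l : ℝ} (hl : 0 ≤ l) :
    1 + (exp l - 1) * p ≤ exp (l * p + p * (1 - p) * (exp l - 1 - l)) := by
  let g (x : ℝ) : ℝ := x * p + p * (1 - p) * (exp x - 1 - x)
  let g' (x : ℝ) : ℝ := p + p * (1 - p) * (exp x - 1)
  have hg (x : ℝ) : HasDerivAt g (g' x) x := by
    convert! ((hasDerivAt_id x).mul_const p).add
      ((((Real.hasDerivAt_exp x).sub_const 1).sub (hasDerivAt_id x)).const_mul (p * (1 - p)))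
      using 1
    rw [one_mul]
  have hratio (x : ℝ) : HasDerivAt (fun x => (1 + (exp x - 1) * p) * exp (-g x))
      (-(p ^ 2 * (1 - p) * (exp x - 1) ^ 2 * exp (-g x))) x := by
    convert! ((((Real.hasDerivAt_exp x).sub_const 1).mul_const p).const_add 1).mul
      (hg x).neg.exp using 1
    dsimp only [g', Pi.neg_apply]
    ring
  have hanti : Antitone fun x => (1 + (exp x - 1) * p) * exp (-g x) :=
    antitone_of_hasDerivAt_nonpos hratio fun x => neg_nonpos.2 <| by
      have := sub_nonneg.2 hp
      positivity
  have hle : (1 + (exp l - 1) * p) * exp (-g l) ≤ 1 := by simpa [g] using hanti hl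
  rwa [exp_neg, ← div_eq_mul_inv, div_le_one (exp_pos _)] at hle

lemma le_rpow_mul_exp_of_forall_le_exp {q v s : ℝ} (hv : 0 ≤ v) (hs : 0 < s)
    (hq : ∀ l : ℝ, 0 ≤ l → q ≤ exp (v * (exp l - 1 - l) - l * s)) :
    q ≤ (v / (v + s)) ^ (v + s) * exp s := by
  rcases hv.eq_or_lt with rfl | hv
  · have hlim : Filter.Tendsto (fun l : ℝ => exp (-(l * s))) Filter.atTop (nhds 0) :=
      tendsto_exp_neg_atTop_nhds_zero.comp (Filter.tendsto_id.atTop_mul_const hs)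
    rw [zero_add, zero_div, zero_rpow hs.ne', zero_mul]
    refine ge_of_tendsto hlim ?_
    filter_upwards [Filter.eventually_ge_atTop 0] with l hl
    simpa only [zero_mul, zero_sub] using hq l hl
  · have hratio : 0 < (v + s) / v := by positivity
    have hlog : log (v / (v + s)) = -log ((v + s) / v) := by rw [← log_inv, inv_div]
    have hl : 0 ≤ log ((v + s) / v) := log_nonneg ((one_le_div hv).2 (by linarith))
    refine (hq _ hl).trans_eq ?_
    rw [rpow_def_of_pos (by positivity), ← exp_add, exp_log hratio, hlog]
    congr 1
    field_simp
    ring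

variable {Ω ι : Type*} {m0 : MeasurableSpace Ω} {μ : Measure Ω}

lemma measureReal_ge_le_of_mgf_le [IsFiniteMeasure μ] {Y : Ω → ℝ} {m v s : ℝ}
    (hv : 0 ≤ v) (hs : 0 < s) (hint : ∀ l, 0 ≤ l → Integrable (fun ω => exp (l * Y ω)) μ)
    (hmgf : ∀ l, 0 ≤ l → mgf Y μ l ≤ exp (l * m + v * (exp l - 1 - l))) :
    μ.real {ω | m + s ≤ Y ω} ≤ (v / (v + s)) ^ (v + s) * exp s := by
  refine le_rpow_mul_exp_of_forall_le_exp hv hs fun l hl => ?_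
  calc μ.real {ω | m + s ≤ Y ω}
      ≤ exp (-l * (m + s)) * mgf Y μ l := measure_ge_le_exp_mul_mgf _ hl (hint l hl)
    _ ≤ exp (-l * (m + s)) * exp (l * m + v * (exp l - 1 - l)) := by gcongr; exact hmgf l hl
    _ = exp (v * (exp l - 1 - l) - l * s) := by rw [← exp_add]; congr 1; ring

variable {ℱ : Filtration ℕ m0} {X : ι → ℕ → Ω → ℝ} {T : ℕ}

lemma mgf_sum_le_integral_prod_of_martingale [IsFiniteMeasure μ]
    (hmart : ∀ i, Martingale (X i) ℱ μ)
    (hmem : ∀ t ≤ T, ∀ᵐ ω ∂μ, ∀ i, X i t ω ∈ Set.Icc (0 : ℝ) 1)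
    (hneg : ∀ t < T, ∀ᵐ ω ∂μ,
      Pairwise fun i j => (X i (t + 1) ω - X i t ω) * (X j (t + 1) ω - X j t ω) ≤ 0)
    (A : Finset ι) {l : ℝ} (hl : 0 ≤ l) :
    mgf (fun ω => ∑ i ∈ A, X i T ω) μ l ≤ ∫ ω, ∏ i ∈ A, (1 + (exp l - 1) * X i 0 ω) ∂μ := by
  have hc : 0 ≤ exp l - 1 := sub_nonneg.2 (one_le_exp hl)
  let M (i : ι) (t : ℕ) (ω : Ω) : ℝ := 1 + (exp l - 1) * X i t ω
  have hM (i : ι) : Martingale (M i) ℱ μ :=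
    (martingale_const ℱ μ 1).add ((hmart i).smul (exp l - 1))
  have hM_mem (t : ℕ) (ht : t ≤ T) : ∀ᵐ ω ∂μ, ∀ i, M i t ω ∈ Set.Icc 0 (exp l) := by
    filter_upwards [hmem t ht] with ω hω i
    exact ⟨add_nonneg zero_le_one (mul_nonneg hc (hω i).1),
      by linarith [mul_le_of_le_one_right hc (hω i).2]⟩
  have hM_neg (t : ℕ) (ht : t < T) : ∀ᵐ ω ∂μ,
      Pairwise fun i j => (M i (t + 1) ω - M i t ω) * (M j (t + 1) ω - M j t ω) ≤ 0 := by
    filter_upwards [hneg t ht] with ω hω i j hij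
    calc (M i (t + 1) ω - M i t ω) * (M j (t + 1) ω - M j t ω)
        = (exp l - 1) ^ 2 * ((X i (t + 1) ω - X i t ω) * (X j (t + 1) ω - X j t ω)) := by ring
      _ ≤ 0 := mul_nonpos_of_nonneg_of_nonpos (sq_nonneg _) (hω hij)
  calc mgf (fun ω => ∑ i ∈ A, X i T ω) μ l
      ≤ ∫ ω, ∏ i ∈ A, M i T ω ∂μ := by
        refine integral_mono_of_nonneg (.of_forall fun ω => (exp_pos _).le)
          (integrable_prod_of_mem_Icc (fun i => ((hM i).integrable T).aestronglyMeasurable)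
            (hM_mem T le_rfl) A) ?_
        filter_upwards [hmem T le_rfl] with ω hω
        rw [Finset.mul_sum, exp_sum]
        gcongr with i
        exact exp_mul_le_one_add_mul_exp_sub_one (hω i) l
    _ ≤ ∫ ω, ∏ i ∈ A, M i 0 ω ∂μ :=
        integral_prod_le_integral_prod_zero_of_martingale hM hM_mem hM_neg A

lemma prod_one_add_exp_sub_one_mul_le_exp {p : ι → ℝ} {A : Finset ι}
    (hp : ∀ i ∈ A, p i ∈ Set.Icc (0 : ℝ) 1) {l : ℝ} (hl : 0 ≤ l) :
    ∏ i ∈ A, (1 + (exp l - 1) * p i) ≤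
      exp (l * ∑ i ∈ A, p i + (∑ i ∈ A, p i * (1 - p i)) * (exp l - 1 - l)) := by
  rw [Finset.mul_sum, Finset.sum_mul, ← Finset.sum_add_distrib, exp_sum]
  exact Finset.prod_le_prod
    (fun i hi => add_nonneg zero_le_one (mul_nonneg (sub_nonneg.2 (one_le_exp hl)) (hp i hi).1))
    fun i hi => one_add_exp_sub_one_mul_le_exp (hp i hi).2 hl

lemma measureReal_sum_ge_le_of_martingale [IsProbabilityMeasure μ] {p : ι → ℝ}
    (hmart : ∀ i, Martingale (X i) ℱ μ)
    (hmem : ∀ t ≤ T, ∀ᵐ ω ∂μ, ∀ i, X i t ω ∈ Set.Icc (0 : ℝ) 1)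
    (hstart : ∀ᵐ ω ∂μ, ∀ i, X i 0 ω = p i)
    (hneg : ∀ t < T, ∀ᵐ ω ∂μ,
      Pairwise fun i j => (X i (t + 1) ω - X i t ω) * (X j (t + 1) ω - X j t ω) ≤ 0)
    (A : Finset ι) {v s : ℝ} (hv : v = ∑ i ∈ A, p i * (1 - p i)) (hs : 0 < s) :
    μ.real {ω | ∑ i ∈ A, p i + s ≤ ∑ i ∈ A, X i T ω} ≤ (v / (v + s)) ^ (v + s) * exp s := by
  have hp (i : ι) : p i ∈ Set.Icc (0 : ℝ) 1 := by
    obtain ⟨ω, hω, hω'⟩ := (hstart.and (hmem 0 T.zero_le)).exists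
    exact hω i ▸ hω' i
  have hv_nonneg : 0 ≤ v :=
    hv ▸ Finset.sum_nonneg fun i _ => mul_nonneg (hp i).1 (sub_nonneg.2 (hp i).2)
  have hsum_mem : ∀ᵐ ω ∂μ, ∑ i ∈ A, X i T ω ∈ Set.Icc (0 : ℝ) (∑ _i ∈ A, 1) :=
    (hmem T le_rfl).mono fun ω hω =>
      ⟨Finset.sum_nonneg fun i _ => (hω i).1, Finset.sum_le_sum fun i _ => (hω i).2⟩
  have hsum_meas : AEMeasurable (fun ω => ∑ i ∈ A, X i T ω) μ :=
    Finset.aemeasurable_fun_sum A fun i _ => ((hmart i).integrable T).aemeasurable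
  refine measureReal_ge_le_of_mgf_le hv_nonneg hs
    (fun l _ => integrable_exp_mul_of_mem_Icc hsum_meas hsum_mem) fun l hl => ?_
  calc mgf (fun ω => ∑ i ∈ A, X i T ω) μ l
      ≤ ∫ ω, ∏ i ∈ A, (1 + (exp l - 1) * X i 0 ω) ∂μ :=
        mgf_sum_le_integral_prod_of_martingale hmart hmem hneg A hl
    _ = ∫ _, ∏ i ∈ A, (1 + (exp l - 1) * p i) ∂μ :=
        integral_congr_ae (hstart.mono fun ω hω => by simp only [hω])
    _ = ∏ i ∈ A, (1 + (exp l - 1) * p i) := by rw [integral_const, probReal_univ, one_smul]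
    _ ≤ exp (l * ∑ i ∈ A, p i + v * (exp l - 1 - l)) :=
        hv ▸ prod_one_add_exp_sub_one_mul_le_exp (fun i _ => hp i) hl

end Bennett

lemma piBound_eq_rpow_mul_exp {η δ : ℝ} (hη : 0 ≤ η) (hδ : 0 ≤ δ) {k : ℕ} (hk : k ≠ 0) :
    piBound η δ k = (k * η / (k * η + k * δ)) ^ (k * η + k * δ) * exp (k * δ) := by
  have hk' : (k : ℝ) ≠ 0 := Nat.cast_ne_zero.2 hk
  rw [piBound, ← mul_add, mul_div_mul_left _ _ hk', mul_pow, exp_nat_mul, mul_comm (k : ℝ) (η + δ),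
    rpow_mul_natCast (by positivity)]

/-- Since increments with pairwise nonpositive products move at most one coordinate up and at most
one down, the steps here are pair exchanges whose two amounts may differ. -/
theorem theorem1_upper_tail_general
    {Ω ι : Type*} {m0 : MeasurableSpace Ω} {μ : Measure Ω} [IsProbabilityMeasure μ]
    (ℱ : Filtration ℕ m0) {k : ℕ} (hk : 1 ≤ k) (w : ι → ℝ)
    (T : ℕ) (X : ℕ → Ω → ι → ℝ)
    (hmart : ∀ i, Martingale (fun t ω => X t ω i) ℱ μ)
    (hmem : ∀ t ≤ T, ∀ᵐ ω ∂μ, ∀ i, X t ω i ∈ Set.Icc (0 : ℝ) 1)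
    (hstart : ∀ᵐ ω ∂μ, ∀ i, X 0 ω i = k * w i)
    (hneg : ∀ t < T, ∀ᵐ ω ∂μ,
      Pairwise fun i j => (X (t + 1) ω i - X t ω i) * (X (t + 1) ω j - X t ω j) ≤ 0)
    (A : Finset ι) (δ : ℝ) (hδ : 0 < δ)
    (α η : ℝ) (hα : α = ∑ i ∈ A, w i) (hη : η = α - k * ∑ i ∈ A, (w i) ^ 2) :
    μ {ω | α + δ ≤ (1 / k) * ∑ i ∈ A, X T ω i} ≤ ENNReal.ofReal (piBound η δ k) := by
  have hk_pos : (0 : ℝ) < k := by exact_mod_cast hk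
  have hmean : ∑ i ∈ A, k * w i = k * α := by rw [hα, Finset.mul_sum]
  have hvar : k * η = ∑ i ∈ A, k * w i * (1 - k * w i) := by
    rw [hη, hα, mul_sub, Finset.mul_sum, Finset.mul_sum, Finset.mul_sum, ← Finset.sum_sub_distrib]
    exact Finset.sum_congr rfl fun i _ => by ring
  have hη_nonneg : 0 ≤ η := by
    obtain ⟨ω, hω, hω'⟩ := (hstart.and (hmem 0 T.zero_le)).exists
    refine nonneg_of_mul_nonneg_right (hvar ▸ Finset.sum_nonneg fun i _ => ?_) hk_pos
    rw [← hω i]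
    exact mul_nonneg (hω' i).1 (sub_nonneg.2 (hω' i).2)
  have hevent : {ω | α + δ ≤ (1 / k) * ∑ i ∈ A, X T ω i} =
      {ω | ∑ i ∈ A, k * w i + k * δ ≤ ∑ i ∈ A, X T ω i} := by
    ext ω
    rw [Set.mem_ofPred_eq, Set.mem_ofPred_eq, hmean, ← mul_add, one_div, le_inv_mul_iff₀ hk_pos]
  rw [hevent, ← ofReal_measureReal (measure_ne_top _ _),
    piBound_eq_rpow_mul_exp hη_nonneg hδ.le (Nat.one_le_iff_ne_zero.1 hk)]
  exact ENNReal.ofReal_le_ofReal <| measureReal_sum_ge_le_of_martingale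
    (X := fun i t ω => X t ω i) hmart hmem hstart hneg A hvar (by positivity)

/-- **Theorem 1, upper tail.** For a martingale `X` with values in
`Δ = {x ∈ [0,1]^n : ∑ i, x^i = k}`, starting at `k·w`, ending in `{0,1}^n`, and
changing at most two coordinates at each step, the upper tail of the sample
proportion of any set `A` is bounded by `π(η,δ,k)`. -/
theorem theorem1_upper_tail
    {Ω : Type*} {m0 : MeasurableSpace Ω} {μ : Measure Ω} [IsProbabilityMeasure μ]
    (ℱ : Filtration ℕ m0) (n k : ℕ) (hk : 1 ≤ k) (hkn : k ≤ n)
    (w : Fin n → ℝ) (hw : ∀ i, w i ∈ Set.Icc (0 : ℝ) (1 / k))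
    (hwsum : ∑ i, w i = 1)
    (T : ℕ) (X : ℕ → Ω → (Fin n → ℝ))
    (hmart : ∀ i : Fin n, Martingale (fun t ω => X t ω i) ℱ μ)
    (hΔ : ∀ t ≤ T, ∀ᵐ ω ∂μ,
      (∀ i, X t ω i ∈ Set.Icc (0 : ℝ) 1) ∧ ∑ i, X t ω i = k)
    (hstart : ∀ᵐ ω ∂μ, ∀ i, X 0 ω i = k * w i)
    (hterm : ∀ᵐ ω ∂μ, ∀ i, X T ω i = 0 ∨ X T ω i = 1)
    (hpair : ∀ t, 1 ≤ t → t ≤ T → ∀ᵐ ω ∂μ, ∃ i j : Fin n,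
      ∀ l, l ≠ i → l ≠ j → X t ω l = X (t - 1) ω l)
    (A : Finset (Fin n)) (δ : ℝ) (hδ : 0 < δ)
    (α η : ℝ) (hα : α = ∑ i ∈ A, w i) (hη : η = α - k * ∑ i ∈ A, (w i) ^ 2) :
    μ {ω | α + δ ≤ (1 / k) * ∑ i ∈ A, X T ω i} ≤ ENNReal.ofReal (piBound η δ k) := by
  refine theorem1_upper_tail_general ℱ hk w T X hmart (fun t ht => (hΔ t ht).mono fun _ h => h.1)
    hstart (fun t ht => ?_) A δ hδ α η hα hη
  filter_upwards [hΔ t ht.le, hΔ (t + 1) ht, hpair (t + 1) t.succ_pos ht] with ω hω hω' ⟨i, j, hij⟩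
  exact pairwise_mul_sub_nonpos_of_sum_eq (hω.2.trans hω'.2.symm) hij
end

section
/- (Theorem 1, lower tail.) Let n ≥ k ≥ 1 and weights w^1,…,w^n ∈ [0,1/k] with Σ_{i=1}^n w^i = 1. Let (X_t)_{t=0,…,T} be a martingale with values in Δ := {x ∈ [0,1]^n : Σ_{i=1}^n x^i = k}, adapted to a filtration (F_t), with X_0 = k·w almost surely, X_T ∈ {0,1}^n almost surely, and such that for every t ≥ 1, almost surely the difference X_t − X_{t−1} vanishes in all but at most two coordinates. Then for every subset A ⊆ {1,…,n} and every δ > 0, setting α := Σ_{i∈A} w^i and η := α − k·Σ_{i∈A} (w^i)², one has P[(1/k)·Σ_{i∈A} X_T^i ≤ α − δ] ≤ π(η, δ, k). -/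
open MeasureTheory ProbabilityTheory Real

/-!
With `b = 1 - exp (-l)`, convexity gives `exp (-l x) ≤ 1 - b x` on `[0,1]`, so the Laplace transform
of `∑ i ∈ A, X_T^i` is at most `E[∏ i ∈ A, (1 - b X_T^i)]`. A zero-sum step that moves only two
coordinates moves them in opposite directions, which makes this product a supermartingale: the
second-order terms of a product of two factors have the good sign. Hence the expectation is at most
`∏ i ∈ A, (1 - b k w^i)`, the value for independent Bernoulli variables of parameters `k w^i`, and
Bennett's classical estimate finishes the proof.
-/

section BennettInequalities

lemma exp_mul_le_bennett {l z : ℝ} (hl : 0 ≤ l) (hz : |z| ≤ 1) :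
    exp (l * z) ≤ 1 + l * z + z ^ 2 * (exp l - 1 - l) := by
  have tail (x : ℝ) : HasSum (fun n : ℕ => x ^ (n + 2) / (n + 2).factorial) (exp x - 1 - x) := by
    have h := NormedSpace.expSeries_div_hasSum_exp x
    rw [← Real.exp_eq_exp_ℝ, ← hasSum_nat_add_iff' 2] at h
    simpa [Finset.sum_range_succ, sub_sub] using h
  have term_le (n : ℕ) : (l * z) ^ (n + 2) / (n + 2).factorial
      ≤ z ^ 2 * (l ^ (n + 2) / (n + 2).factorial) := by
    have hzn : z ^ n ≤ 1 := (le_abs_self _).trans (abs_pow z n ▸ pow_le_one₀ (abs_nonneg z) hz)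
    calc (l * z) ^ (n + 2) / (n + 2).factorial
        = z ^ 2 * (l ^ (n + 2) / (n + 2).factorial) * z ^ n := by ring
      _ ≤ z ^ 2 * (l ^ (n + 2) / (n + 2).factorial) := mul_le_of_le_one_right (by positivity) hzn
  linarith [hasSum_le term_le (tail (l * z)) ((tail l).mul_left (z ^ 2))]

lemma one_sub_mul_le_exp_bennett {l p : ℝ} (hl : 0 ≤ l) (hp : p ∈ Set.Icc (0 : ℝ) 1) :
    1 - (1 - exp (-l)) * p ≤ exp ((exp l - 1 - l) * (p * (1 - p)) - l * p) := by
  obtain ⟨hp0, hp1⟩ := hp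
  have failure := exp_mul_le_bennett (z := p) hl (abs_le.2 ⟨by linarith, hp1⟩)
  have success := exp_mul_le_bennett (z := p - 1) hl (abs_le.2 ⟨by linarith, by linarith⟩)
  have centered : (1 - p) * exp (l * p) + p * exp (l * (p - 1))
      ≤ exp ((exp l - 1 - l) * (p * (1 - p))) := calc
    _ ≤ (1 - p) * (1 + l * p + p ^ 2 * (exp l - 1 - l))
        + p * (1 + l * (p - 1) + (p - 1) ^ 2 * (exp l - 1 - l)) := by
      gcongr
    _ = (exp l - 1 - l) * (p * (1 - p)) + 1 := by ring
    _ ≤ _ := add_one_le_exp _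
  calc 1 - (1 - exp (-l)) * p
      = ((1 - p) * exp (l * p) + p * exp (l * (p - 1))) * exp (-(l * p)) := by
        rw [add_mul, mul_assoc, mul_assoc, ← exp_add, ← exp_add, add_neg_cancel, exp_zero,
          show l * (p - 1) + -(l * p) = -l by ring]
        ring
    _ ≤ exp ((exp l - 1 - l) * (p * (1 - p))) * exp (-(l * p)) := by gcongr
    _ = exp ((exp l - 1 - l) * (p * (1 - p)) - l * p) := by rw [← exp_add, ← sub_eq_add_neg]

lemma exp_mul_le_one_sub_mul (t : ℝ) {x : ℝ} (hx : x ∈ Set.Icc (0 : ℝ) 1) :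
    exp (t * x) ≤ 1 - (1 - exp t) * x := by
  have h := convexOn_exp.2 (Set.mem_univ 0) (Set.mem_univ t) (sub_nonneg.2 hx.2) hx.1
    (sub_add_cancel 1 x)
  simp only [smul_eq_mul, mul_zero, zero_add, exp_zero, mul_one] at h
  rw [mul_comm t x]
  linarith

lemma exp_mul_sum_le_prod_one_sub_mul {ι : Type*} {A : Finset ι} {x : ι → ℝ} (t : ℝ)
    (hx : ∀ i ∈ A, x i ∈ Set.Icc (0 : ℝ) 1) :
    exp (t * ∑ i ∈ A, x i) ≤ ∏ i ∈ A, (1 - (1 - exp t) * x i) := by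
  rw [Finset.mul_sum, exp_sum]
  exact Finset.prod_le_prod (fun i _ => (exp_pos _).le)
    fun i hi => exp_mul_le_one_sub_mul t (hx i hi)

lemma le_piBound_of_forall_le_exp {η δ q : ℝ} {k : ℕ} (hη : 0 ≤ η) (hδ : 0 < δ) (hk : 0 < k)
    (h : ∀ l, 0 ≤ l → q ≤ exp (k * ((exp l - 1 - l) * η - l * δ))) : q ≤ piBound η δ k := by
  rcases hη.eq_or_lt with rfl | hη
  · have hbound : piBound 0 δ k = 0 := by
      rw [piBound, zero_div, zero_add, zero_rpow hδ.ne', zero_mul, zero_pow hk.ne']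
    have hlim : Filter.Tendsto (fun l : ℝ => exp (-l * (k * δ))) Filter.atTop (nhds 0) :=
      tendsto_exp_atBot.comp
        (Filter.tendsto_neg_atTop_atBot.atBot_mul_const (mul_pos (Nat.cast_pos.2 hk) hδ))
    rw [hbound]
    refine ge_of_tendsto hlim (Filter.eventually_atTop.2 ⟨0, fun l hl => (h l hl).trans_eq ?_⟩)
    ring_nf
  · have hratio : 0 < η / (η + δ) := by positivity
    -- The exponent is minimised where `exp l = (η + δ) / η`.
    have hopt := h (-log (η / (η + δ)))
      (neg_nonneg.2 (log_nonpos hratio.le (div_le_one_of_le₀ (by linarith) (by linarith))))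
    refine hopt.trans_eq ?_
    rw [piBound, rpow_def_of_pos hratio, ← exp_add, ← exp_nat_mul, exp_neg, exp_log hratio]
    congr 2
    field_simp
    ring

end BennettInequalities

section OpposedIncrements

variable {ι : Type*}

/-- From `x` to `y`, no two distinct coordinates in `s` move strictly in the same direction. A move
that keeps the total and changes at most two coordinates has this property, under which products of
supermartingales with values in `[0,1]` are again supermartingales. -/
def OpposedIncrements (s : Set ι) (x y : ι → ℝ) : Prop :=
  s.Pairwise fun i j => (y i - x i) * (y j - x j) ≤ 0

namespace OpposedIncrements

lemma mono {s s' : Set ι} {x y : ι → ℝ} (h : OpposedIncrements s' x y) (hs : s ⊆ s') :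
    OpposedIncrements s x y :=
  Set.Pairwise.mono hs h

lemma const_sub_mul {s : Set ι} {x y : ι → ℝ} (h : OpposedIncrements s x y) (a b : ℝ) :
    OpposedIncrements s (fun i => a - b * x i) (fun i => a - b * y i) := fun i hi j hj hij =>
  calc (a - b * y i - (a - b * x i)) * (a - b * y j - (a - b * x j))
      = b ^ 2 * ((y i - x i) * (y j - x j)) := by ring
    _ ≤ 0 := mul_nonpos_of_nonneg_of_nonpos (sq_nonneg b) (h hi hj hij)

lemma of_sum_eq [Fintype ι] {x y : ι → ℝ} (hsum : ∑ i, y i = ∑ i, x i)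
    (hpair : ∃ i j, ∀ l, l ≠ i → l ≠ j → y l = x l) (s : Set ι) : OpposedIncrements s x y := by
  classical
  intro p _ q _ hpq
  obtain ⟨i, j, hij⟩ := hpair
  have eq_or_eq {r : ι} (hr : y r ≠ x r) : r = i ∨ r = j := by
    by_contra! h
    exact hr (hij r h.1 h.2)
  by_cases hp : y p = x p
  · simp [hp]
  by_cases hq : y q = x q
  · simp [hq]
  have hrest : ∀ l, l ≠ p ∧ l ≠ q → y l - x l = 0 := by grind
  have hzero : (y p - x p) + (y q - x q) = 0 := by
    rw [← Fintype.sum_eq_add p q hpq hrest, Finset.sum_sub_distrib, hsum, sub_self]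
  rw [eq_neg_of_add_eq_zero_right hzero, mul_neg, neg_nonpos]
  exact mul_self_nonneg _

end OpposedIncrements

lemma mul_prod_sub_prod_nonpos {A : Finset ι} {x y : ι → ℝ} {c : ℝ}
    (hx : ∀ i ∈ A, 0 ≤ x i) (hy : ∀ i ∈ A, 0 ≤ y i) (hc : ∀ i ∈ A, c * (y i - x i) ≤ 0) :
    c * (∏ i ∈ A, y i - ∏ i ∈ A, x i) ≤ 0 := by
  rcases lt_trichotomy c 0 with hneg | rfl | hpos
  · refine mul_nonpos_of_nonpos_of_nonneg hneg.le (sub_nonneg.2 (Finset.prod_le_prod hx ?_))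
    exact fun i hi => sub_nonneg.1 (nonneg_of_mul_nonpos_right (hc i hi) hneg)
  · rw [zero_mul]
  · refine mul_nonpos_of_nonneg_of_nonpos hpos.le (sub_nonpos.2 (Finset.prod_le_prod hy ?_))
    exact fun i hi => sub_nonpos.1 (nonpos_of_mul_nonpos_right (hc i hi) hpos)

end OpposedIncrements

section ProductsOfSupermartingales

variable {Ω ι : Type*} {m m0 : MeasurableSpace Ω} {μ : Measure Ω} [IsFiniteMeasure μ]

lemma condExp_mul_le_mul_of_opposed {f f' g g' : Ω → ℝ} (hm : m ≤ m0)
    (hf : StronglyMeasurable[m] f) (hg : StronglyMeasurable[m] g)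
    (hf' : Integrable f' μ) (hg' : Integrable g' μ)
    (hfg : Integrable (f * g) μ) (hfg' : Integrable (f * g') μ)
    (hf'g : Integrable (f' * g) μ) (hf'g' : Integrable (f' * g') μ)
    (hf0 : 0 ≤ᵐ[μ] f) (hg0 : 0 ≤ᵐ[μ] g) (hfle : μ[f' | m] ≤ᵐ[μ] f) (hgle : μ[g' | m] ≤ᵐ[μ] g)
    (hopp : ∀ᵐ ω ∂μ, (f' ω - f ω) * (g' ω - g ω) ≤ 0) :
    μ[f' * g' | m] ≤ᵐ[μ] f * g := by
  have hmono : μ[f' * g' | m] ≤ᵐ[μ] μ[f * g' + f' * g - f * g | m] := by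
    refine condExp_mono hf'g' ((hfg'.add hf'g).sub hfg) ?_
    filter_upwards [hopp] with ω hω
    simp only [Pi.add_apply, Pi.sub_apply, Pi.mul_apply]
    linarith
  filter_upwards [hmono, condExp_sub (hfg'.add hf'g) hfg m, condExp_add hfg' hf'g m,
    condExp_mul_of_stronglyMeasurable_left hf hfg' hg',
    condExp_mul_of_stronglyMeasurable_right hg hf'g hf', hf0, hg0, hfle, hgle]
    with ω hω hsub hadd hleft hright hfω hgω hf'ω hg'ω
  calc μ[f' * g' | m] ω
      ≤ f ω * μ[g' | m] ω + μ[f' | m] ω * g ω - f ω * g ω := by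
        rw [hsub, Pi.sub_apply, hadd, Pi.add_apply, hleft, hright,
          condExp_of_stronglyMeasurable hm (hf.mul hg) hfg] at hω
        exact hω
    _ ≤ f ω * g ω + f ω * g ω - f ω * g ω := by gcongr
    _ = f ω * g ω := add_sub_cancel_right _ _

lemma integrable_of_mem_unitInterval {f : Ω → ℝ} (hf : AEStronglyMeasurable f μ)
    (hmem : ∀ᵐ ω ∂μ, f ω ∈ unitInterval) : Integrable f μ :=
  .of_mem_Icc 0 1 hf.aemeasurable hmem

lemma integrable_mul_of_mem_unitInterval {f g : Ω → ℝ} (hf : AEStronglyMeasurable f μ)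
    (hg : AEStronglyMeasurable g μ) (hf01 : ∀ᵐ ω ∂μ, f ω ∈ unitInterval)
    (hg01 : ∀ᵐ ω ∂μ, g ω ∈ unitInterval) : Integrable (f * g) μ :=
  integrable_of_mem_unitInterval (hf.mul hg) <| by
    filter_upwards [hf01, hg01] with ω hfω hgω using unitInterval.mul_mem hfω hgω

lemma integrable_prod_of_mem_unitInterval {A : Finset ι} {f : Ω → ι → ℝ}
    (hf : ∀ i ∈ A, AEStronglyMeasurable (f · i) μ)
    (hmem : ∀ᵐ ω ∂μ, ∀ i ∈ A, f ω i ∈ unitInterval) : Integrable (fun ω => ∏ i ∈ A, f ω i) μ :=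
  integrable_of_mem_unitInterval (Finset.aestronglyMeasurable_fun_prod A hf)
    (hmem.mono fun _ hω => unitInterval.prod_mem hω)

lemma condExp_mul_le_mul_of_mem_unitInterval {f f' g g' : Ω → ℝ} (hm : m ≤ m0)
    (hf : StronglyMeasurable[m] f) (hg : StronglyMeasurable[m] g)
    (hf' : AEStronglyMeasurable f' μ) (hg' : AEStronglyMeasurable g' μ)
    (hf01 : ∀ᵐ ω ∂μ, f ω ∈ unitInterval) (hg01 : ∀ᵐ ω ∂μ, g ω ∈ unitInterval)
    (hf'01 : ∀ᵐ ω ∂μ, f' ω ∈ unitInterval) (hg'01 : ∀ᵐ ω ∂μ, g' ω ∈ unitInterval)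
    (hfle : μ[f' | m] ≤ᵐ[μ] f) (hgle : μ[g' | m] ≤ᵐ[μ] g)
    (hopp : ∀ᵐ ω ∂μ, (f' ω - f ω) * (g' ω - g ω) ≤ 0) :
    μ[f' * g' | m] ≤ᵐ[μ] f * g :=
  have hfμ : AEStronglyMeasurable f μ := (hf.mono hm).aestronglyMeasurable
  have hgμ : AEStronglyMeasurable g μ := (hg.mono hm).aestronglyMeasurable
  condExp_mul_le_mul_of_opposed hm hf hg
    (integrable_of_mem_unitInterval hf' hf'01) (integrable_of_mem_unitInterval hg' hg'01)
    (integrable_mul_of_mem_unitInterval hfμ hgμ hf01 hg01)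
    (integrable_mul_of_mem_unitInterval hfμ hg' hf01 hg'01)
    (integrable_mul_of_mem_unitInterval hf' hgμ hf'01 hg01)
    (integrable_mul_of_mem_unitInterval hf' hg' hf'01 hg'01)
    (hf01.mono fun _ hω => hω.1) (hg01.mono fun _ hω => hω.1) hfle hgle hopp

lemma condExp_prod_le_prod_of_opposed {A : Finset ι} {f f' : Ω → ι → ℝ} (hm : m ≤ m0)
    (hf : ∀ i ∈ A, StronglyMeasurable[m] (f · i))
    (hf' : ∀ i ∈ A, AEStronglyMeasurable (f' · i) μ)
    (hmem : ∀ᵐ ω ∂μ, ∀ i ∈ A, f ω i ∈ unitInterval)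
    (hmem' : ∀ᵐ ω ∂μ, ∀ i ∈ A, f' ω i ∈ unitInterval)
    (hle : ∀ i ∈ A, μ[(f' · i) | m] ≤ᵐ[μ] (f · i))
    (hopp : ∀ᵐ ω ∂μ, OpposedIncrements A (f ω) (f' ω)) :
    μ[fun ω => ∏ i ∈ A, f' ω i | m] ≤ᵐ[μ] fun ω => ∏ i ∈ A, f ω i := by
  classical
  induction A using Finset.induction_on with
  | empty => simp [condExp_const hm, Filter.EventuallyLE.refl]
  | insert a A ha ih =>
    simp only [Finset.forall_mem_insert, Filter.eventually_and] at hf hf' hmem hmem' hle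
    simp only [Finset.prod_insert ha]
    have hrest := ih hf.2 hf'.2 hmem.2 hmem'.2 hle.2
      (hopp.mono fun ω hω => hω.mono (Finset.coe_subset.2 (Finset.subset_insert a A)))
    refine condExp_mul_le_mul_of_mem_unitInterval hm hf.1
      (Finset.stronglyMeasurable_fun_prod A hf.2) hf'.1
      (Finset.aestronglyMeasurable_fun_prod A hf'.2)
      hmem.1 (hmem.2.mono fun ω hω => unitInterval.prod_mem hω)
      hmem'.1 (hmem'.2.mono fun ω hω => unitInterval.prod_mem hω) hle.1 hrest ?_
    filter_upwards [hmem.2, hmem'.2, hopp] with ω hω hω' hoppω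
    exact mul_prod_sub_prod_nonpos (fun i hi => (hω i hi).1) (fun i hi => (hω' i hi).1)
      fun i hi => hoppω (Finset.mem_insert_self a A) (Finset.mem_insert_of_mem hi)
        (ne_of_mem_of_not_mem hi ha).symm

lemma integral_prod_le_integral_prod_zero {ℱ : Filtration ℕ m0} {A : Finset ι} {T : ℕ}
    {Y : ℕ → Ω → ι → ℝ} (hY : ∀ i ∈ A, Supermartingale (fun t ω => Y t ω i) ℱ μ)
    (hmem : ∀ t ≤ T, ∀ᵐ ω ∂μ, ∀ i ∈ A, Y t ω i ∈ unitInterval)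
    (hopp : ∀ t < T, ∀ᵐ ω ∂μ, OpposedIncrements A (Y t ω) (Y (t + 1) ω)) :
    ∫ ω, ∏ i ∈ A, Y T ω i ∂μ ≤ ∫ ω, ∏ i ∈ A, Y 0 ω i ∂μ := by
  suffices h : ∀ t ≤ T, ∫ ω, ∏ i ∈ A, Y t ω i ∂μ ≤ ∫ ω, ∏ i ∈ A, Y 0 ω i ∂μ from h T le_rfl
  intro t
  induction t with
  | zero => exact fun _ => le_rfl
  | succ t ih =>
    intro ht
    have hstep := condExp_prod_le_prod_of_opposed (ℱ.le t)
      (fun i hi => (hY i hi).stronglyMeasurable t)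
      (fun i hi => ((hY i hi).integrable (t + 1)).aestronglyMeasurable)
      (hmem t (by omega)) (hmem (t + 1) ht)
      (fun i hi => (hY i hi).condExp_ae_le t.le_succ) (hopp t ht)
    have hint : Integrable (fun ω => ∏ i ∈ A, Y t ω i) μ :=
      integrable_prod_of_mem_unitInterval
        (fun i hi => ((hY i hi).integrable t).aestronglyMeasurable) (hmem t (by omega))
    calc ∫ ω, ∏ i ∈ A, Y (t + 1) ω i ∂μ
        = ∫ ω, (μ[fun ω => ∏ i ∈ A, Y (t + 1) ω i | ℱ t]) ω ∂μ := (integral_condExp (ℱ.le t)).symm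
      _ ≤ ∫ ω, ∏ i ∈ A, Y t ω i ∂μ := integral_mono_ae integrable_condExp hint hstep
      _ ≤ ∫ ω, ∏ i ∈ A, Y 0 ω i ∂μ := ih (by omega)

end ProductsOfSupermartingales

section LowerTail

variable {Ω ι : Type*} {m0 : MeasurableSpace Ω} {μ : Measure Ω} [IsProbabilityMeasure μ]
  {ℱ : Filtration ℕ m0} {A : Finset ι} {T : ℕ} {X : ℕ → Ω → ι → ℝ}

lemma one_sub_mul_mem_unitInterval {b x : ℝ} (hb : b ∈ unitInterval) (hx : x ∈ unitInterval) :
    1 - b * x ∈ unitInterval :=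
  Set.Icc.mem_iff_one_sub_mem.1 (unitInterval.mul_mem hb hx)

lemma one_sub_exp_neg_mem_unitInterval {l : ℝ} (hl : 0 ≤ l) : 1 - exp (-l) ∈ unitInterval :=
  Set.Icc.mem_iff_one_sub_mem.1 ⟨(exp_pos _).le, exp_le_one_iff.2 (neg_nonpos.2 hl)⟩

lemma integrable_exp_neg_mul_sum {x : Ω → ι → ℝ} {l : ℝ} (hl : 0 ≤ l)
    (hmeas : ∀ i ∈ A, AEMeasurable (x · i) μ) (hmem : ∀ᵐ ω ∂μ, ∀ i ∈ A, x ω i ∈ unitInterval) :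
    Integrable (fun ω => exp (-l * ∑ i ∈ A, x ω i)) μ := by
  refine .of_mem_Icc 0 1 ((Finset.aemeasurable_fun_sum A hmeas).const_mul (-l)).exp ?_
  filter_upwards [hmem] with ω hω
  exact ⟨(exp_pos _).le, exp_le_one_iff.2 (mul_nonpos_of_nonpos_of_nonneg (neg_nonpos.2 hl)
    (Finset.sum_nonneg fun i hi => (hω i hi).1))⟩

lemma mgf_neg_sum_le_prod (hX : ∀ i ∈ A, Submartingale (fun t ω => X t ω i) ℱ μ)
    (hmem : ∀ t ≤ T, ∀ᵐ ω ∂μ, ∀ i ∈ A, X t ω i ∈ unitInterval)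
    (hopp : ∀ t < T, ∀ᵐ ω ∂μ, OpposedIncrements A (X t ω) (X (t + 1) ω))
    {p : ι → ℝ} (hstart : ∀ᵐ ω ∂μ, ∀ i ∈ A, X 0 ω i = p i) {l : ℝ} (hl : 0 ≤ l) :
    mgf (fun ω => ∑ i ∈ A, X T ω i) μ (-l) ≤ ∏ i ∈ A, (1 - (1 - exp (-l)) * p i) := by
  set b := 1 - exp (-l)
  have hb01 : b ∈ unitInterval := one_sub_exp_neg_mem_unitInterval hl
  have hmemY : ∀ t ≤ T, ∀ᵐ ω ∂μ, ∀ i ∈ A, 1 - b * X t ω i ∈ unitInterval := fun t ht =>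
    (hmem t ht).mono fun ω hω i hi => one_sub_mul_mem_unitInterval hb01 (hω i hi)
  have hY : ∀ i ∈ A, Supermartingale (fun t ω => 1 - b * X t ω i) ℱ μ := fun i hi =>
    (martingale_const ℱ μ (1 : ℝ)).supermartingale.sub_submartingale
      ((hX i hi).smul_nonneg hb01.1)
  have hmeas (i) (hi : i ∈ A) : AEMeasurable (X T · i) μ := ((hX i hi).integrable T).aemeasurable
  have hint : Integrable (fun ω => ∏ i ∈ A, (1 - b * X T ω i)) μ :=
    integrable_prod_of_mem_unitInterval
      (fun i hi => ((hY i hi).integrable T).aestronglyMeasurable) (hmemY T le_rfl)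
  calc mgf (fun ω => ∑ i ∈ A, X T ω i) μ (-l)
      ≤ ∫ ω, ∏ i ∈ A, (1 - b * X T ω i) ∂μ := by
        refine integral_mono_ae (integrable_exp_neg_mul_sum hl hmeas (hmem T le_rfl)) hint ?_
        filter_upwards [hmem T le_rfl] with ω hω using exp_mul_sum_le_prod_one_sub_mul (-l) hω
    _ ≤ ∫ ω, ∏ i ∈ A, (1 - b * X 0 ω i) ∂μ :=
        integral_prod_le_integral_prod_zero (Y := fun t ω i => 1 - b * X t ω i) hY hmemY
          fun t ht => (hopp t ht).mono fun ω hω => hω.const_sub_mul 1 b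
    _ = ∫ _, ∏ i ∈ A, (1 - b * p i) ∂μ := integral_congr_ae <| hstart.mono fun ω hω =>
        Finset.prod_congr rfl fun i hi => by rw [hω i hi]
    _ = ∏ i ∈ A, (1 - b * p i) := by simp

lemma measureReal_sum_le_le_exp (hX : ∀ i ∈ A, Submartingale (fun t ω => X t ω i) ℱ μ)
    (hmem : ∀ t ≤ T, ∀ᵐ ω ∂μ, ∀ i ∈ A, X t ω i ∈ unitInterval)
    (hopp : ∀ t < T, ∀ᵐ ω ∂μ, OpposedIncrements A (X t ω) (X (t + 1) ω))
    {p : ι → ℝ} (hp : ∀ i ∈ A, p i ∈ unitInterval)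
    (hstart : ∀ᵐ ω ∂μ, ∀ i ∈ A, X 0 ω i = p i) (s : ℝ) {l : ℝ} (hl : 0 ≤ l) :
    μ.real {ω | ∑ i ∈ A, X T ω i ≤ ∑ i ∈ A, p i - s}
      ≤ exp ((exp l - 1 - l) * ∑ i ∈ A, p i * (1 - p i) - l * s) :=
  calc μ.real {ω | ∑ i ∈ A, X T ω i ≤ ∑ i ∈ A, p i - s}
      ≤ exp (-(-l) * (∑ i ∈ A, p i - s)) * mgf (fun ω => ∑ i ∈ A, X T ω i) μ (-l) :=
        measure_le_le_exp_mul_mgf _ (neg_nonpos.2 hl) <| integrable_exp_neg_mul_sum hl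
          (fun i hi => ((hX i hi).integrable T).aemeasurable) (hmem T le_rfl)
    _ ≤ exp (-(-l) * (∑ i ∈ A, p i - s)) * ∏ i ∈ A, (1 - (1 - exp (-l)) * p i) := by
        gcongr
        exact mgf_neg_sum_le_prod hX hmem hopp hstart hl
    _ ≤ exp (-(-l) * (∑ i ∈ A, p i - s))
          * ∏ i ∈ A, exp ((exp l - 1 - l) * (p i * (1 - p i)) - l * p i) := by
        gcongr with i hi
        · exact fun i hi =>
            (one_sub_mul_mem_unitInterval (one_sub_exp_neg_mem_unitInterval hl) (hp i hi)).1
        · exact one_sub_mul_le_exp_bennett hl (hp i hi)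
    _ = exp ((exp l - 1 - l) * ∑ i ∈ A, p i * (1 - p i) - l * s) := by
        rw [← exp_sum, ← exp_add, Finset.sum_sub_distrib, ← Finset.mul_sum, ← Finset.mul_sum]
        ring_nf

end LowerTail

theorem theorem1_lower_tail_general
    {Ω ι : Type*} {m0 : MeasurableSpace Ω} {μ : Measure Ω} [IsProbabilityMeasure μ]
    (ℱ : Filtration ℕ m0) (k : ℕ) (hk : 1 ≤ k) (w : ι → ℝ) (A : Finset ι)
    (T : ℕ) (X : ℕ → Ω → ι → ℝ)
    (hX : ∀ i ∈ A, Submartingale (fun t ω => X t ω i) ℱ μ)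
    (hmem : ∀ t ≤ T, ∀ᵐ ω ∂μ, ∀ i ∈ A, X t ω i ∈ Set.Icc (0 : ℝ) 1)
    (hstart : ∀ᵐ ω ∂μ, ∀ i ∈ A, X 0 ω i = k * w i)
    (hopp : ∀ t < T, ∀ᵐ ω ∂μ, OpposedIncrements A (X t ω) (X (t + 1) ω))
    (δ : ℝ) (hδ : 0 < δ)
    (α η : ℝ) (hα : α = ∑ i ∈ A, w i) (hη : η = α - k * ∑ i ∈ A, (w i) ^ 2) :
    μ {ω | (1 / k) * ∑ i ∈ A, X T ω i ≤ α - δ} ≤ ENNReal.ofReal (piBound η δ k) := by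
  have hk0 : (0 : ℝ) < k := Nat.cast_pos.2 hk
  have hp : ∀ i ∈ A, k * w i ∈ unitInterval := by
    obtain ⟨ω, hω, hω0⟩ := ((hmem 0 T.zero_le).and hstart).exists
    exact fun i hi => hω0 i hi ▸ hω i hi
  have hmean : ∑ i ∈ A, k * w i = k * α := by rw [hα, Finset.mul_sum]
  have hvariance : ∑ i ∈ A, k * w i * (1 - k * w i) = k * η := by
    rw [hη, hα, mul_sub, Finset.mul_sum, Finset.mul_sum, Finset.mul_sum, ← Finset.sum_sub_distrib]
    exact Finset.sum_congr rfl fun i _ => by ring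
  have hη0 : 0 ≤ η := nonneg_of_mul_nonneg_right (hvariance ▸ Finset.sum_nonneg fun i hi =>
    mul_nonneg (hp i hi).1 (sub_nonneg.2 (hp i hi).2)) hk0
  have hevent (ω) : (1 / k) * ∑ i ∈ A, X T ω i ≤ α - δ ↔
      ∑ i ∈ A, X T ω i ≤ ∑ i ∈ A, k * w i - k * δ := by
    rw [hmean, ← mul_sub, one_div, inv_mul_le_iff₀ hk0]
  simp only [hevent]
  rw [← ofReal_measureReal]
  refine ENNReal.ofReal_le_ofReal (le_piBound_of_forall_le_exp hη0 hδ hk fun l hl => ?_)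
  refine (measureReal_sum_le_le_exp hX hmem hopp hp hstart (k * δ) hl).trans_eq ?_
  rw [hvariance]
  ring_nf


/-- **Theorem 1, lower tail.** For a martingale `X` with values in
`Δ = {x ∈ [0,1]^n : ∑ i, x^i = k}`, starting at `k·w`, ending in `{0,1}^n`, and
changing at most two coordinates at each step, the lower tail of the sample
proportion of any set `A` is bounded by `π(η,δ,k)`. -/
theorem theorem1_lower_tail
    {Ω : Type*} {m0 : MeasurableSpace Ω} {μ : Measure Ω} [IsProbabilityMeasure μ]
    (ℱ : Filtration ℕ m0) (n k : ℕ) (hk : 1 ≤ k) (hkn : k ≤ n)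
    (w : Fin n → ℝ) (hw : ∀ i, w i ∈ Set.Icc (0 : ℝ) (1 / k))
    (hwsum : ∑ i, w i = 1)
    (T : ℕ) (X : ℕ → Ω → (Fin n → ℝ))
    (hmart : ∀ i : Fin n, Martingale (fun t ω => X t ω i) ℱ μ)
    (hΔ : ∀ t ≤ T, ∀ᵐ ω ∂μ,
      (∀ i, X t ω i ∈ Set.Icc (0 : ℝ) 1) ∧ ∑ i, X t ω i = k)
    (hstart : ∀ᵐ ω ∂μ, ∀ i, X 0 ω i = k * w i)
    (hterm : ∀ᵐ ω ∂μ, ∀ i, X T ω i = 0 ∨ X T ω i = 1)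
    (hpair : ∀ t, 1 ≤ t → t ≤ T → ∀ᵐ ω ∂μ, ∃ i j : Fin n,
      ∀ l, l ≠ i → l ≠ j → X t ω l = X (t - 1) ω l)
    (A : Finset (Fin n)) (δ : ℝ) (hδ : 0 < δ)
    (α η : ℝ) (hα : α = ∑ i ∈ A, w i) (hη : η = α - k * ∑ i ∈ A, (w i) ^ 2) :
    μ {ω | (1 / k) * ∑ i ∈ A, X T ω i ≤ α - δ} ≤ ENNReal.ofReal (piBound η δ k) :=
  theorem1_lower_tail_general ℱ k hk w A T X (fun i _ => (hmart i).submartingale)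
    (fun t ht => (hΔ t ht).mono fun _ hx i _ => hx.1 i) (hstart.mono fun _ h i _ => h i)
    (fun t ht => by
      filter_upwards [hΔ t ht.le, hΔ (t + 1) ht, hpair (t + 1) t.succ_pos ht] with ω hx hy hxy
      exact .of_sum_eq (hy.2.trans hx.2.symm) hxy A)
    δ hδ α η hα hη
end

section
/- (Theorem 2, upper tail, round-martingale form.) Let k ≥ 1 and let (Z_ℓ)_{ℓ=0,…,k} be a real-valued martingale adapted to a filtration (F_ℓ) with Z_0 = k·α almost surely for a constant α ∈ [0,1], such that |Z_ℓ − Z_{ℓ−1}| ≤ 1 almost surely for every ℓ, and such that Σ_{ℓ=1}^k E[(Z_ℓ − Z_{ℓ−1})² | F_{ℓ−1}] ≤ k·η almost surely for a constant η with 0 < η. Then for every δ with 0 < δ < 1, P[Z_k − Z_0 ≥ k·δ] ≤ π*(η, δ, k). -/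
open MeasureTheory ProbabilityTheory Real

/-- Kullback–Leibler divergence `D(q‖p) = q·ln(q/p) + (1−q)·ln((1−q)/(1−p))`. -/
noncomputable def klDiv (q p : ℝ) : ℝ :=
  q * Real.log (q / p) + (1 - q) * Real.log ((1 - q) / (1 - p))

/-- `π*(η,δ,k) := exp(−D((η+δ)/(1+η) ‖ η/(1+η))·k)`. -/
noncomputable def piStar (η δ : ℝ) (k : ℕ) : ℝ :=
  Real.exp (-(klDiv ((η + δ) / (1 + η)) (η / (1 + η))) * k)

/-!
By Taylor's formula, the parabola that touches `x ↦ exp (t * x)` at `-η` and meets it again at `1`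
lies above it on `(-∞, 1]`. Hence, among laws on `(-∞, 1]` with mean `0` and variance `η`, the one
on `{-η, 1}` has the largest moment generating function, say with value `M` at `t`. If `C` is the
leading coefficient of the parabola, a conditional variance `v` other than `η` gives the bound
`M + C * (v - η) ≤ M * exp (C / M * (v - η))`, with the same `C` at every step. As the differences
`v - η` have nonpositive sum along the process, they cost nothing in the product, so the deviation
probability is at most `(exp (-t * δ) * M) ^ k`; the optimal `t` turns the base into `exp (-D)`.
-/

lemma exp_eq_one_add_add_sq_mul_integral (u : ℝ) :
    exp u = 1 + u + u ^ 2 * ∫ s in (0 : ℝ)..1, (1 - s) * exp (s * u) := by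
  have hderiv (s : ℝ) : HasDerivAt (fun s ↦ (1 - s) * u * exp (s * u) + exp (s * u))
      (u ^ 2 * ((1 - s) * exp (s * u))) s := by
    have hexp : HasDerivAt (fun s ↦ exp (s * u)) (exp (s * u) * u) s := by
      simpa using ((hasDerivAt_id s).mul_const u).exp
    have hlin : HasDerivAt (fun s ↦ (1 - s) * u) (-u) s := by
      simpa using ((hasDerivAt_id s).const_sub 1).mul_const u
    exact ((hlin.mul hexp).add hexp).congr_deriv (by ring)
  have hFTC := intervalIntegral.integral_eq_sub_of_hasDerivAt (a := 0) (b := 1)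
    (fun s _ ↦ hderiv s) (Continuous.intervalIntegrable (by fun_prop) _ _)
  rw [intervalIntegral.integral_const_mul] at hFTC
  rw [hFTC]
  simp only [one_mul, zero_mul, sub_zero, exp_zero]
  ring

lemma exp_mul_le_quadratic {t x : ℝ} (ht : 0 ≤ t) (hx : x ≤ 1) :
    exp (t * x) ≤ 1 + t * x + (exp t - 1 - t) * x ^ 2 := by
  have hint : ∫ s in (0 : ℝ)..1, (1 - s) * exp (s * (t * x))
      ≤ ∫ s in (0 : ℝ)..1, (1 - s) * exp (s * t) := by
    refine intervalIntegral.integral_mono_on zero_le_one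
      (Continuous.intervalIntegrable (by fun_prop) _ _)
      (Continuous.intervalIntegrable (by fun_prop) _ _) fun s hs ↦ ?_
    have hs1 : 0 ≤ 1 - s := sub_nonneg.2 hs.2
    have hs0 : 0 ≤ s := hs.1
    gcongr
    exact mul_le_of_le_one_right ht hx
  have htx := exp_eq_one_add_add_sq_mul_integral (t * x)
  have ht' := exp_eq_one_add_add_sq_mul_integral t
  linear_combination htx + (t * x) ^ 2 * hint - x ^ 2 * ht'

/-- The moment generating function at `t` of the mean-zero law on `{-η, 1}`, whose variance
is `η`; its atoms have masses `1 / (1 + η)` and `η / (1 + η)`. -/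
noncomputable def twoPointMgf (η t : ℝ) : ℝ :=
  (exp (-(t * η)) + η * exp t) / (1 + η)

lemma twoPointMgf_pos {η : ℝ} (hη : 0 ≤ η) (t : ℝ) : 0 < twoPointMgf η t := by
  unfold twoPointMgf
  positivity

lemma exists_quadratic_majorant_exp_mul {η t : ℝ} (hη : 0 ≤ η) (ht : 0 ≤ t) :
    ∃ B C : ℝ, 0 ≤ B ∧ 0 ≤ C ∧
      ∀ x ≤ 1, exp (t * x) ≤ twoPointMgf η t - C * η + B * x + C * x ^ 2 := by
  have hη1 : 0 < 1 + η := by positivity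
  set e := exp (-(t * η))
  set C := e * (exp (t * (1 + η)) - 1 - t * (1 + η)) / (1 + η) ^ 2 with hCdef
  have hC : 0 ≤ C := by
    have := add_one_le_exp (t * (1 + η))
    have : 0 ≤ exp (t * (1 + η)) - 1 - t * (1 + η) := by linarith
    positivity
  have hmgf : twoPointMgf η t = e * (1 + t * η) + C * η ^ 2 + C * η := by
    have hexp : exp t = e * exp (t * (1 + η)) := by rw [← exp_add]; ring_nf
    rw [twoPointMgf, hexp, hCdef]
    field_simp
    ring
  refine ⟨e * t + 2 * C * η, C, by positivity, hC, fun x hx ↦ ?_⟩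
  have hy : (x + η) / (1 + η) ≤ 1 := (div_le_one hη1).2 (by linarith)
  calc exp (t * x)
      = e * exp (t * (1 + η) * ((x + η) / (1 + η))) := by
        rw [← exp_add]; congr 1; field_simp; ring
    _ ≤ e * (1 + t * (1 + η) * ((x + η) / (1 + η))
          + (exp (t * (1 + η)) - 1 - t * (1 + η)) * ((x + η) / (1 + η)) ^ 2) := by
        gcongr; exact exp_mul_le_quadratic (by positivity) hy
    _ = e * (1 + t * (x + η)) + C * (x + η) ^ 2 := by rw [hCdef]; field_simp
    _ = twoPointMgf η t - C * η + (e * t + 2 * C * η) * x + C * x ^ 2 := by rw [hmgf]; ring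

lemma exists_exp_neg_mul_twoPointMgf_eq_exp_neg_klDiv {η δ : ℝ} (hη : 0 < η) (hδ0 : 0 ≤ δ)
    (hδ1 : δ < 1) :
    ∃ t, 0 ≤ t ∧ exp (-(t * δ)) * twoPointMgf η t
      = exp (-klDiv ((η + δ) / (1 + η)) (η / (1 + η))) := by
  have hδ : 0 < 1 - δ := sub_pos.2 hδ1
  set R := (η + δ) / (η * (1 - δ)) with hR
  have hR1 : 1 ≤ R := (one_le_div (by positivity)).2 (by nlinarith [mul_nonneg hη.le hδ0])
  -- The critical point of `t ↦ exp (-(t * δ)) * twoPointMgf η t`, where `exp (t * (1 + η)) = R`.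
  set t := log R / (1 + η)
  have ht : t * (1 + η) = log R := div_mul_cancel₀ _ (by positivity)
  have hmgf : exp (-(t * δ)) * twoPointMgf η t = exp (-(t * (η + δ)) - log (1 - δ)) := by
    have hexp : exp t = exp (-(t * η)) * R := by
      rw [← exp_log (zero_lt_one.trans_le hR1), ← ht, ← exp_add]; ring_nf
    have hsplit : exp (-(t * (η + δ))) = exp (-(t * δ)) * exp (-(t * η)) := by
      rw [← exp_add]; ring_nf
    rw [twoPointMgf, hexp, exp_sub, exp_log hδ, hsplit, hR]
    field_simp
    ring
  have hkl : klDiv ((η + δ) / (1 + η)) (η / (1 + η)) = t * (η + δ) + log (1 - δ) := by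
    have hq : (η + δ) / (1 + η) / (η / (1 + η)) = R * (1 - δ) := by rw [hR]; field_simp
    have hq' : (1 - (η + δ) / (1 + η)) / (1 - η / (1 + η)) = 1 - δ := by
      rw [one_sub_div (by positivity), one_sub_div (by positivity)]
      field_simp
      ring
    rw [klDiv, hq, hq', log_mul (by positivity) hδ.ne', ← ht]
    field_simp
    ring
  refine ⟨t, div_nonneg (log_nonneg hR1) (by positivity), ?_⟩
  rw [hmgf, hkl, neg_add, sub_eq_add_neg]

section Probability

variable {Ω : Type*} {m m0 : MeasurableSpace Ω} {μ : Measure Ω} {ℱ : Filtration ℕ m0}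

lemma memLp_top_exp_of_ae_le {X : Ω → ℝ} {K : ℝ} (hX : AEStronglyMeasurable X μ)
    (hXK : ∀ᵐ ω ∂μ, X ω ≤ K) : MemLp (fun ω ↦ exp (X ω)) ⊤ μ :=
  memLp_top_of_bound (continuous_exp.comp_aestronglyMeasurable hX) (exp K) <|
    hXK.mono fun ω hω ↦ by simpa using hω

lemma memLp_top_exp_mul_sub_mul_sub {X V : Ω → ℝ} {t r η : ℝ} (ht : 0 ≤ t) (hr : 0 ≤ r)
    (hX : AEStronglyMeasurable X μ) (hX1 : ∀ᵐ ω ∂μ, X ω ≤ 1) (hV : AEStronglyMeasurable V μ)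
    (hV0 : 0 ≤ᵐ[μ] V) : MemLp (fun ω ↦ exp (t * X ω - r * (V ω - η))) ⊤ μ := by
  refine memLp_top_exp_of_ae_le (K := t + r * η)
    ((hX.const_mul t).sub ((hV.sub aestronglyMeasurable_const).const_mul r)) ?_
  filter_upwards [hX1, hV0] with ω hX1 hV0
  linarith [mul_le_of_le_one_right ht hX1, mul_nonneg hr hV0]

lemma memLp_top_prod {ι : Type*} {s : Finset ι} {Y : ι → Ω → ℝ}
    (hY : ∀ i ∈ s, MemLp (Y i) ⊤ μ) : MemLp (fun ω ↦ ∏ i ∈ s, Y i ω) ⊤ μ := by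
  simpa using MemLp.prod' hY

lemma condExp_le_of_ae_le_quadratic [IsFiniteMeasure μ] (hm : m ≤ m0) {X Y : Ω → ℝ} {A B C : ℝ}
    (hB : 0 ≤ B) (hY : Integrable Y μ) (hX : MemLp X 2 μ) (hX0 : μ[X | m] ≤ᵐ[μ] 0)
    (hYX : ∀ᵐ ω ∂μ, Y ω ≤ A + B * X ω + C * X ω ^ 2) :
    μ[Y | m] ≤ᵐ[μ] fun ω ↦ A + C * (μ[fun ω ↦ X ω ^ 2 | m]) ω := by
  have hA : Integrable (fun _ : Ω ↦ A) μ := integrable_const A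
  have hBX : Integrable (B • X) μ := (hX.integrable one_le_two).smul B
  have hCX : Integrable (C • fun ω ↦ X ω ^ 2) μ := hX.integrable_sq.smul C
  have hmono := condExp_mono (m := m) hY ((hA.add hBX).add hCX) hYX
  filter_upwards [hmono, condExp_add (hA.add hBX) hCX m, condExp_add hA hBX m,
    condExp_smul B X m, condExp_smul C (fun ω ↦ X ω ^ 2) m, hX0]
    with ω hmono hadd hadd' hsmul hsmul' hX0
  rw [hadd, Pi.add_apply, hadd', Pi.add_apply, hsmul, hsmul', condExp_const hm] at hmono
  simp only [Pi.smul_apply, smul_eq_mul, Pi.zero_apply] at hmono hX0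
  linarith [mul_nonpos_of_nonneg_of_nonpos hB hX0]

lemma condExp_exp_sub_le_of_quadratic_majorant [IsFiniteMeasure μ] (hm : m ≤ m0) {X : Ω → ℝ}
    {η t M B C : ℝ} (ht : 0 ≤ t) (hM : 0 < M) (hB : 0 ≤ B) (hC : 0 ≤ C)
    (hquad : ∀ x ≤ 1, exp (t * x) ≤ M - C * η + B * x + C * x ^ 2)
    (hX : MemLp X 2 μ) (hX1 : ∀ᵐ ω ∂μ, X ω ≤ 1) (hX0 : μ[X | m] ≤ᵐ[μ] 0) :
    μ[fun ω ↦ exp (t * X ω - C / M * ((μ[fun ω ↦ X ω ^ 2 | m]) ω - η)) | m]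
      ≤ᵐ[μ] fun _ ↦ M := by
  set v := μ[fun ω ↦ X ω ^ 2 | m]
  have hv0 : 0 ≤ᵐ[μ] v := condExp_nonneg (.of_forall fun ω ↦ sq_nonneg (X ω))
  set P : Ω → ℝ := fun ω ↦ exp (-(C / M * (v ω - η)))
  set Y : Ω → ℝ := fun ω ↦ exp (t * X ω)
  have hP : StronglyMeasurable[m] P := continuous_exp.comp_stronglyMeasurable
    ((stronglyMeasurable_condExp.sub stronglyMeasurable_const).const_mul (C / M)).neg
  have hfactor : (fun ω ↦ exp (t * X ω - C / M * (v ω - η))) = P * Y := by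
    ext ω
    rw [Pi.mul_apply, ← exp_add]
    ring_nf
  have hPY : Integrable (P * Y) μ := hfactor ▸
    (memLp_top_exp_mul_sub_mul_sub ht (by positivity) hX.1 hX1
      integrable_condExp.aestronglyMeasurable hv0).integrable le_top
  have hYint : Integrable Y μ := (memLp_top_exp_of_ae_le (K := t) (hX.1.const_mul t)
    (hX1.mono fun ω hω ↦ mul_le_of_le_one_right ht hω)).integrable le_top
  have hYv := condExp_le_of_ae_le_quadratic hm hB hYint hX hX0 (hX1.mono fun ω hω ↦ hquad _ hω)
  rw [hfactor]
  filter_upwards [condExp_mul_of_stronglyMeasurable_left hP hPY hYint, hYv] with ω hpull hYv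
  rw [hpull, Pi.mul_apply]
  calc P ω * (μ[Y | m]) ω
      ≤ P ω * (M - C * η + C * v ω) := by gcongr
    _ = P ω * (M * (C / M * (v ω - η) + 1)) := by field_simp; ring
    _ ≤ P ω * (M * exp (C / M * (v ω - η))) := by gcongr; exact add_one_le_exp _
    _ = M := by rw [mul_left_comm, ← exp_add, neg_add_cancel, exp_zero, mul_one]

lemma integral_prod_range_le_prod [IsProbabilityMeasure μ] {Y : ℕ → Ω → ℝ} {c : ℕ → ℝ} {k : ℕ}
    (hc : ∀ i < k, 0 ≤ c i) (hY0 : ∀ i < k, 0 ≤ᵐ[μ] Y i)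
    (hYm : ∀ i < k, StronglyMeasurable[ℱ (i + 1)] (Y i)) (hYtop : ∀ i < k, MemLp (Y i) ⊤ μ)
    (hYc : ∀ i < k, μ[Y i | ℱ i] ≤ᵐ[μ] fun _ ↦ c i) :
    ∫ ω, ∏ i ∈ Finset.range k, Y i ω ∂μ ≤ ∏ i ∈ Finset.range k, c i := by
  induction k with
  | zero => simp
  | succ k ih =>
    set P : Ω → ℝ := fun ω ↦ ∏ i ∈ Finset.range k, Y i ω
    have hP : StronglyMeasurable[ℱ k] P :=
      Finset.stronglyMeasurable_fun_prod _ fun i hi ↦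
        have hi := Finset.mem_range.1 hi
        (hYm i (by lia)).mono (ℱ.mono hi)
    have hP0 : 0 ≤ᵐ[μ] P := by
      have hall : ∀ᵐ ω ∂μ, ∀ i ∈ Finset.range k, 0 ≤ Y i ω :=
        (Finset.eventually_all _).2 fun i hi ↦ hY0 i (by grind)
      exact hall.mono fun ω hω ↦ Finset.prod_nonneg hω
    have hPtop : MemLp P ⊤ μ := memLp_top_prod fun i hi ↦ hYtop i (by grind)
    have hYk := hYtop k k.lt_succ_self
    have hPY : Integrable (P * Y k) μ := (hYk.mul hPtop).integrable le_top
    have hPc : ∀ᵐ ω ∂μ, (μ[P * Y k | ℱ k]) ω ≤ P ω * c k := by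
      filter_upwards [condExp_mul_of_stronglyMeasurable_left hP hPY (hYk.integrable le_top),
        hP0, hYc k k.lt_succ_self] with ω hpull hP0 hYc
      rw [hpull]
      exact mul_le_mul_of_nonneg_left hYc hP0
    simp only [Finset.prod_range_succ]
    calc ∫ ω, P ω * Y k ω ∂μ
        = ∫ ω, (μ[P * Y k | ℱ k]) ω ∂μ := (integral_condExp (ℱ.le k)).symm
      _ ≤ ∫ ω, P ω * c k ∂μ := integral_mono_ae integrable_condExp
          ((hPtop.integrable le_top).mul_const _) hPc
      _ = (∫ ω, P ω ∂μ) * c k := integral_mul_const _ _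
      _ ≤ (∏ i ∈ Finset.range k, c i) * c k := by
          gcongr
          · exact hc k k.lt_succ_self
          · exact ih (fun i hi ↦ hc i (by lia)) (fun i hi ↦ hY0 i (by lia))
              (fun i hi ↦ hYm i (by lia)) (fun i hi ↦ hYtop i (by lia))
              (fun i hi ↦ hYc i (by lia))

lemma measureReal_sum_range_ge_le [IsProbabilityMeasure μ] {W : ℕ → Ω → ℝ} {c : ℕ → ℝ} {k : ℕ}
    (hc : ∀ i < k, 0 ≤ c i) (hWm : ∀ i < k, StronglyMeasurable[ℱ (i + 1)] (W i))
    (hWtop : ∀ i < k, MemLp (fun ω ↦ exp (W i ω)) ⊤ μ)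
    (hWc : ∀ i < k, μ[fun ω ↦ exp (W i ω) | ℱ i] ≤ᵐ[μ] fun _ ↦ c i) (a : ℝ) :
    μ.real {ω | a ≤ ∑ i ∈ Finset.range k, W i ω} ≤ exp (-a) * ∏ i ∈ Finset.range k, c i := by
  have hexp (ω : Ω) : exp (1 * ∑ i ∈ Finset.range k, W i ω)
      = ∏ i ∈ Finset.range k, exp (W i ω) := by rw [one_mul, exp_sum]
  have hint : Integrable (fun ω ↦ exp (1 * ∑ i ∈ Finset.range k, W i ω)) μ := by
    simp only [hexp]
    exact (memLp_top_prod fun i hi ↦ hWtop i (Finset.mem_range.1 hi)).integrable le_top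
  refine (measure_ge_le_exp_mul_mgf a zero_le_one hint).trans ?_
  rw [neg_one_mul, mgf]
  simp only [hexp]
  gcongr
  exact integral_prod_range_le_prod hc (fun i _ ↦ .of_forall fun ω ↦ (exp_pos (W i ω)).le)
    (fun i hi ↦ continuous_exp.comp_stronglyMeasurable (hWm i hi)) hWtop hWc

lemma condExp_sub_nonpos_of_supermartingale {ι E : Type*} [Preorder ι] [NormedAddCommGroup E]
    [NormedSpace ℝ E] [CompleteSpace E] [PartialOrder E] [IsOrderedAddMonoid E]
    {𝒢 : Filtration ι m0} [SigmaFiniteFiltration μ 𝒢] {f : ι → Ω → E}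
    (hf : Supermartingale f 𝒢 μ) {i j : ι} (hij : i ≤ j) :
    μ[f j - f i | 𝒢 i] ≤ᵐ[μ] 0 := by
  refine (condExp_sub (hf.integrable j) (hf.integrable i) (𝒢 i)).le.trans ?_
  rw [condExp_of_stronglyMeasurable (𝒢.le i) (hf.stronglyMeasurable i) (hf.integrable i)]
  exact (hf.condExp_ae_le hij).mono fun ω hω ↦ sub_nonpos.2 hω

lemma measureReal_sub_ge_le_twoPointMgf_pow [IsProbabilityMeasure μ] {Z : ℕ → Ω → ℝ} {k : ℕ}
    {η t : ℝ} (hη : 0 ≤ η) (ht : 0 ≤ t) (hZ : Supermartingale Z ℱ μ)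
    (hL2 : ∀ i < k, MemLp (fun ω ↦ Z (i + 1) ω - Z i ω) 2 μ)
    (hle : ∀ i < k, ∀ᵐ ω ∂μ, Z (i + 1) ω - Z i ω ≤ 1) (x : ℝ) :
    μ.real {ω | x ≤ Z k ω - Z 0 ω ∧
        ∑ i ∈ Finset.range k, (μ[fun ω' ↦ (Z (i + 1) ω' - Z i ω') ^ 2 | ℱ i]) ω ≤ k * η}
      ≤ exp (-(t * x)) * twoPointMgf η t ^ k := by
  obtain ⟨B, C, hB, hC, hquad⟩ := exists_quadratic_majorant_exp_mul hη ht
  set M := twoPointMgf η t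
  have hM : 0 < M := twoPointMgf_pos hη t
  have hr : 0 ≤ C / M := by positivity
  set v : ℕ → Ω → ℝ := fun i ↦ μ[fun ω ↦ (Z (i + 1) ω - Z i ω) ^ 2 | ℱ i]
  set W : ℕ → Ω → ℝ := fun i ω ↦ t * (Z (i + 1) ω - Z i ω) - C / M * (v i ω - η)
  have hWm (i : ℕ) : StronglyMeasurable[ℱ (i + 1)] (W i) := by
    have hZi := (hZ.stronglyMeasurable i).mono (ℱ.mono i.le_succ)
    have hvi : StronglyMeasurable[ℱ (i + 1)] (v i) :=
      stronglyMeasurable_condExp.mono (ℱ.mono i.le_succ)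
    exact (((hZ.stronglyMeasurable (i + 1)).sub hZi).const_mul t).sub
      ((hvi.sub stronglyMeasurable_const).const_mul (C / M))
  have hWtop (i : ℕ) (hi : i < k) : MemLp (fun ω ↦ exp (W i ω)) ⊤ μ :=
    memLp_top_exp_mul_sub_mul_sub ht hr (hL2 i hi).1 (hle i hi)
      integrable_condExp.aestronglyMeasurable
      (condExp_nonneg (.of_forall fun ω ↦ sq_nonneg (Z (i + 1) ω - Z i ω)))
  have hWM (i : ℕ) (hi : i < k) : μ[fun ω ↦ exp (W i ω) | ℱ i] ≤ᵐ[μ] fun _ ↦ M :=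
    condExp_exp_sub_le_of_quadratic_majorant (ℱ.le i) ht hM hB hC hquad (hL2 i hi) (hle i hi)
      (condExp_sub_nonpos_of_supermartingale hZ i.le_succ)
  calc μ.real {ω | x ≤ Z k ω - Z 0 ω ∧ ∑ i ∈ Finset.range k, v i ω ≤ k * η}
      ≤ μ.real {ω | t * x ≤ ∑ i ∈ Finset.range k, W i ω} := by
        refine measureReal_mono fun ω ⟨hx, hV⟩ ↦ ?_
        have hsum : ∑ i ∈ Finset.range k, W i ω
            = t * (Z k ω - Z 0 ω) - C / M * (∑ i ∈ Finset.range k, v i ω - k * η) := by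
          simp only [W, Finset.sum_sub_distrib, ← Finset.mul_sum, Finset.sum_range_sub (Z · ω),
            Finset.sum_const, Finset.card_range, nsmul_eq_mul]
        rw [Set.mem_ofPred_eq, hsum]
        linarith [mul_le_mul_of_nonneg_left hx ht,
          mul_nonpos_of_nonneg_of_nonpos hr (sub_nonpos.2 hV)]
    _ ≤ exp (-(t * x)) * M ^ k := by
        simpa only [Finset.prod_const, Finset.card_range] using
          measureReal_sum_range_ge_le (fun _ _ ↦ hM.le) (fun i _ ↦ hWm i) hWtop hWM (t * x)

end Probability

theorem theorem2_upper_tail_general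
    {Ω : Type*} {m0 : MeasurableSpace Ω} {μ : Measure Ω} [IsProbabilityMeasure μ]
    {ℱ : Filtration ℕ m0} {k : ℕ} {Z : ℕ → Ω → ℝ} (hZ : Supermartingale Z ℱ μ)
    (hL2 : ∀ ℓ, 1 ≤ ℓ → ℓ ≤ k → MemLp (fun ω ↦ Z ℓ ω - Z (ℓ - 1) ω) 2 μ)
    (hle : ∀ ℓ, 1 ≤ ℓ → ℓ ≤ k → ∀ᵐ ω ∂μ, Z ℓ ω - Z (ℓ - 1) ω ≤ 1)
    {η δ : ℝ} (hη : 0 < η) (hδ0 : 0 ≤ δ) (hδ1 : δ < 1) :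
    μ {ω | k * δ ≤ Z k ω - Z 0 ω ∧
        ∑ ℓ ∈ Finset.Icc 1 k, (μ[fun ω' ↦ (Z ℓ ω' - Z (ℓ - 1) ω') ^ 2 | ℱ (ℓ - 1)]) ω ≤ k * η}
      ≤ ENNReal.ofReal (piStar η δ k) := by
  obtain ⟨t, ht, hopt⟩ := exists_exp_neg_mul_twoPointMgf_eq_exp_neg_klDiv hη hδ0 hδ1
  have hpi : exp (-(t * (k * δ))) * twoPointMgf η t ^ k = piStar η δ k := by
    rw [piStar, mul_comm _ (k : ℝ), exp_nat_mul, ← hopt, mul_pow, ← exp_nat_mul]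
    ring_nf
  rw [← ofReal_measureReal, ← hpi]
  refine ENNReal.ofReal_le_ofReal ?_
  have hshift (f : ℕ → ℝ) : ∑ ℓ ∈ Finset.Icc 1 k, f ℓ = ∑ i ∈ Finset.range k, f (i + 1) := by
    rw [Finset.range_eq_Ico, Finset.sum_Ico_add', zero_add, Finset.Ico_add_one_right_eq_Icc]
  simpa only [hshift, Nat.add_sub_cancel] using
    measureReal_sub_ge_le_twoPointMgf_pow hη.le ht hZ
      (fun i hi ↦ hL2 (i + 1) i.succ_pos hi) (fun i hi ↦ hle (i + 1) i.succ_pos hi) (k * δ)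

/-- **Theorem 2, upper tail, round-martingale form.** For a real-valued
martingale `(Z_ℓ)_{ℓ=0,…,k}` with `Z_0 = k·α`, increments bounded by `1` in absolute
value, and total conditional variance at most `k·η` almost surely, one has
`P[Z_k − Z_0 ≥ k·δ] ≤ π*(η,δ,k)`. -/
theorem theorem2_upper_tail
    {Ω : Type*} {m0 : MeasurableSpace Ω} {μ : Measure Ω} [IsProbabilityMeasure μ]
    (ℱ : Filtration ℕ m0) (k : ℕ) (hk : 1 ≤ k)
    (Z : ℕ → Ω → ℝ) (hmart : Martingale Z ℱ μ)
    (α : ℝ) (hα : α ∈ Set.Icc (0 : ℝ) 1)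
    (hstart : ∀ᵐ ω ∂μ, Z 0 ω = k * α)
    (hdiff : ∀ ℓ, 1 ≤ ℓ → ℓ ≤ k → ∀ᵐ ω ∂μ, |Z ℓ ω - Z (ℓ - 1) ω| ≤ 1)
    (η : ℝ) (hη : 0 < η)
    (hvar : ∀ᵐ ω ∂μ,
      ∑ ℓ ∈ Finset.Icc 1 k,
        (μ[fun ω' => (Z ℓ ω' - Z (ℓ - 1) ω') ^ 2 | ℱ (ℓ - 1)]) ω ≤ k * η)
    (δ : ℝ) (hδ0 : 0 < δ) (hδ1 : δ < 1) :
    μ {ω | k * δ ≤ Z k ω - Z 0 ω} ≤ ENNReal.ofReal (piStar η δ k) :=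
  (measure_mono_ae (hvar.mono fun _ hV hdev ↦ ⟨hdev, hV⟩)).trans <|
    theorem2_upper_tail_general hmart.supermartingale
      (fun ℓ h1 hℓ ↦ .of_bound ((hmart.integrable ℓ).sub (hmart.integrable (ℓ - 1))).1 1
        (hdiff ℓ h1 hℓ))
      (fun ℓ h1 hℓ ↦ (hdiff ℓ h1 hℓ).mono fun _ ↦ le_of_abs_le) hη hδ0.le hδ1
end

section
/- (Theorem 2, lower tail, round-martingale form.) Let k ≥ 1 and let (Z_ℓ)_{ℓ=0,…,k} be a real-valued martingale adapted to a filtration (F_ℓ) with Z_0 = k·α almost surely for a constant α ∈ [0,1], such that |Z_ℓ − Z_{ℓ−1}| ≤ 1 almost surely for every ℓ, and such that Σ_{ℓ=1}^k E[(Z_ℓ − Z_{ℓ−1})² | F_{ℓ−1}] ≤ k·η almost surely for a constant η with 0 < η. Then for every δ with 0 < δ < 1, P[Z_k − Z_0 ≤ −k·δ] ≤ π*(η, δ, k). -/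
open MeasureTheory ProbabilityTheory Real

/-!
Freedman's exponential-supermartingale argument, with the sharp two-point comparison. For `t ≥ 0`
the parabola that touches `x ↦ exp (t * x)` at `-η` and meets it at `1` dominates it on `(-∞, 1]`.
Both points carry the centred law on `{-η, 1}`, whose variance is `η`, so a variable `X ≥ -1` with
nonnegative conditional mean and conditional second moment `v` satisfies
`E[exp (-t X) | m] ≤ G + C (v - η) ≤ G exp (c (v - η))`, where `G` is the moment generating function
of that law and `c = C / G`. Since the rate `c` is the same at every step, multiplying these bounds
and compensating by `exp (-c V)`, with `V` the sum of the conditional variances, controls the lower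
tail by `(G exp (-t δ)) ^ k`. The best `t` turns this into `π*`.
-/

section TwoPoint

variable {η t δ : ℝ}

lemma exp_sub_one_sub_eq_integral (u : ℝ) :
    exp u - 1 - u = u ^ 2 * ∫ s in (0 : ℝ)..1, (1 - s) * exp (s * u) := by
  have hderiv : ∀ s ∈ Set.uIcc (0 : ℝ) 1,
      HasDerivAt (fun s ↦ u * (1 - s) * exp (s * u) + exp (s * u))
        (u ^ 2 * ((1 - s) * exp (s * u))) s := by
    intro s _
    have hexp : HasDerivAt (fun s : ℝ ↦ exp (s * u)) (exp (s * u) * (1 * u)) s :=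
      ((hasDerivAt_id s).mul_const u).exp
    have hlin : HasDerivAt (fun s : ℝ ↦ u * (1 - s)) (u * (-1)) s :=
      ((hasDerivAt_id s).const_sub 1).const_mul u
    exact ((hlin.mul hexp).add hexp).congr_deriv (by ring)
  rw [← intervalIntegral.integral_const_mul, intervalIntegral.integral_eq_sub_of_hasDerivAt hderiv
    (Continuous.intervalIntegrable (by fun_prop) _ _)]
  simp only [sub_self, mul_zero, zero_mul, one_mul, sub_zero, mul_one, exp_zero]
  ring

lemma exp_sub_one_sub_mul_sq_le {x y : ℝ} (ht : 0 ≤ t) (hxy : x ≤ y) :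
    (exp (t * x) - 1 - t * x) * y ^ 2 ≤ (exp (t * y) - 1 - t * y) * x ^ 2 := by
  have hint : ∫ s in (0 : ℝ)..1, (1 - s) * exp (s * (t * x)) ≤
      ∫ s in (0 : ℝ)..1, (1 - s) * exp (s * (t * y)) := by
    refine intervalIntegral.integral_mono_on zero_le_one
      (Continuous.intervalIntegrable (by fun_prop) _ _)
      (Continuous.intervalIntegrable (by fun_prop) _ _) fun s hs ↦ ?_
    have hs0 : 0 ≤ s := hs.1
    have hs1 : 0 ≤ 1 - s := sub_nonneg.2 hs.2
    gcongr
  rw [exp_sub_one_sub_eq_integral, exp_sub_one_sub_eq_integral]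
  linarith [mul_le_mul_of_nonneg_left hint (by positivity : 0 ≤ t ^ 2 * x ^ 2 * y ^ 2)]

/-- The moment generating function at `t` of the centred law on `{-η, 1}`, which puts mass
`η / (1 + η)` at `1` and has variance `η`. It is the extremal law in the tail bound. -/
noncomputable def twoPointMGF (η t : ℝ) : ℝ :=
  (η * exp t + exp (-(t * η))) / (1 + η)

lemma twoPointMGF_pos (hη : 0 ≤ η) : 0 < twoPointMGF η t := by
  unfold twoPointMGF
  positivity

lemma twoPointMGF_eq_exp_mul (η t : ℝ) :
    twoPointMGF η t = exp (-(t * η)) * ((η * exp (t * (1 + η)) + 1) / (1 + η)) := by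
  have hsplit : exp t = exp (-(t * η)) * exp (t * (1 + η)) := by
    rw [← exp_add]
    ring_nf
  rw [twoPointMGF, hsplit]
  ring

lemma exists_quadratic_majorant_exp (hη : 0 ≤ η) (ht : 0 ≤ t) :
    ∃ B C : ℝ, 0 ≤ B ∧ 0 ≤ C ∧
      ∀ x ≤ 1, exp (t * x) ≤ twoPointMGF η t + B * x + C * (x ^ 2 - η) := by
  set κ := (exp (t * (1 + η)) - 1 - t * (1 + η)) / (1 + η) ^ 2 with hκ
  have hκ0 : 0 ≤ κ := div_nonneg (by linarith [add_one_le_exp (t * (1 + η))]) (sq_nonneg _)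
  refine ⟨exp (-(t * η)) * (t + 2 * κ * η), exp (-(t * η)) * κ, by positivity, by positivity,
    fun x hx ↦ ?_⟩
  have htaylor : exp (t * (x + η)) ≤ 1 + t * (x + η) + κ * (x + η) ^ 2 := by
    have hdiv := (le_div_iff₀ (by positivity)).2
      (exp_sub_one_sub_mul_sq_le ht (add_le_add_left hx η))
    rw [mul_div_right_comm, ← hκ] at hdiv
    linarith
  have hvalue : twoPointMGF η t = exp (-(t * η)) * (1 + t * η + κ * η ^ 2 + κ * η) := by
    rw [twoPointMGF_eq_exp_mul, hκ]
    field_simp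
    ring
  calc exp (t * x) = exp (-(t * η)) * exp (t * (x + η)) := by
        rw [← exp_add]
        ring_nf
    _ ≤ exp (-(t * η)) * (1 + t * (x + η) + κ * (x + η) ^ 2) := by gcongr
    _ = _ := by
        rw [hvalue]
        ring

lemma klDiv_twoPoint (hη : 0 < η) :
    klDiv ((η + δ) / (1 + η)) (η / (1 + η)) =
      ((η + δ) * log ((η + δ) / η) + (1 - δ) * log (1 - δ)) / (1 + η) := by
  have hq : (η + δ) / (1 + η) / (η / (1 + η)) = (η + δ) / η := by field_simp
  have hq' : (1 - (η + δ) / (1 + η)) / (1 - η / (1 + η)) = 1 - δ := by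
    field_simp
    ring
  rw [klDiv, hq, hq']
  field_simp
  ring

-- The minimiser of `t ↦ twoPointMGF η t * exp (-(t * δ))` is determined by
-- `exp (t * (1 + η)) = (η + δ) / (η * (1 - δ))`.
lemma exists_twoPointMGF_mul_exp_eq (hη : 0 < η) (hδ0 : 0 ≤ δ) (hδ1 : δ < 1) :
    ∃ t, 0 ≤ t ∧ twoPointMGF η t * exp (-(t * δ)) =
      exp (-klDiv ((η + δ) / (1 + η)) (η / (1 + η))) := by
  have hδ : 0 < 1 - δ := sub_pos.2 hδ1
  set t := (log ((η + δ) / η) - log (1 - δ)) / (1 + η) with ht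
  have hexp : exp (t * (1 + η)) = (η + δ) / η / (1 - δ) := by
    rw [ht, div_mul_cancel₀ _ (by positivity), exp_sub, exp_log (by positivity), exp_log hδ]
  have hvalue : twoPointMGF η t = exp (-(t * η) - log (1 - δ)) := by
    rw [twoPointMGF_eq_exp_mul, hexp, exp_sub, exp_log hδ]
    field_simp
    ring
  refine ⟨t, ?_, ?_⟩
  · have hlog : 0 ≤ log ((η + δ) / η) := log_nonneg ((one_le_div hη).2 (by linarith))
    have hlog' : log (1 - δ) ≤ 0 := log_nonpos hδ.le (by linarith)
    exact div_nonneg (by linarith) (by linarith)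
  · rw [hvalue, klDiv_twoPoint hη, ← exp_add, ht]
    congr 1
    field_simp
    ring

end TwoPoint

section ConditionalExpectation

variable {Ω : Type*} {m m0 : MeasurableSpace Ω} {μ : Measure Ω}

lemma integral_mul_le_integral_mul_of_condExp_le (hm : m ≤ m0) [SigmaFinite (μ.trim hm)]
    {Y f g : Ω → ℝ} (hY : StronglyMeasurable[m] Y) (hY0 : 0 ≤ᵐ[μ] Y) (hf : Integrable f μ)
    (hYf : Integrable (Y * f) μ) (hYg : Integrable (Y * g) μ) (hfg : μ[f | m] ≤ᵐ[μ] g) :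
    ∫ ω, (Y * f) ω ∂μ ≤ ∫ ω, (Y * g) ω ∂μ := by
  rw [← integral_condExp hm]
  refine integral_mono_ae integrable_condExp hYg ?_
  filter_upwards [condExp_mul_of_stronglyMeasurable_left hY hYf hf, hY0, hfg] with ω hpull hY0 hfg
  rw [hpull]
  exact mul_le_mul_of_nonneg_left hfg hY0

variable [IsFiniteMeasure μ]

lemma integrable_exp_neg_mul {X : Ω → ℝ} {t : ℝ} (ht : 0 ≤ t) (hX : AEStronglyMeasurable X μ)
    (hX1 : ∀ᵐ ω ∂μ, -1 ≤ X ω) : Integrable (fun ω ↦ exp (-(t * X ω))) μ := by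
  refine Integrable.of_bound
    (continuous_exp.comp_aestronglyMeasurable (hX.const_mul t).neg) (exp t) ?_
  filter_upwards [hX1] with ω hω
  rw [norm_of_nonneg (exp_pos _).le, exp_le_exp]
  linarith [mul_le_mul_of_nonneg_left hω ht]

lemma condExp_le_of_le_quadratic (hm : m ≤ m0) {X Y : Ω → ℝ} {A B C : ℝ} (hY : Integrable Y μ)
    (hX : MemLp X 2 μ) (hX0 : 0 ≤ᵐ[μ] μ[X | m]) (hB : 0 ≤ B)
    (hYX : ∀ᵐ ω ∂μ, Y ω ≤ A - B * X ω + C * X ω ^ 2) :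
    ∀ᵐ ω ∂μ, (μ[Y | m]) ω ≤ A + C * (μ[fun ω ↦ X ω ^ 2 | m]) ω := by
  have hA : Integrable (fun _ : Ω ↦ A) μ := integrable_const A
  have hBX : Integrable (B • X) μ := (hX.integrable one_le_two).smul B
  have hCX : Integrable (C • fun ω ↦ X ω ^ 2) μ := hX.integrable_sq.smul C
  have hle : μ[Y | m] ≤ᵐ[μ] μ[(fun _ ↦ A) - B • X + C • (fun ω ↦ X ω ^ 2) | m] :=
    condExp_mono hY ((hA.sub hBX).add hCX) hYX
  filter_upwards [hle, condExp_add (hA.sub hBX) hCX m, condExp_sub hA hBX m,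
    condExp_smul (μ := μ) B X m, condExp_smul (μ := μ) C (fun ω ↦ X ω ^ 2) m, hX0]
    with ω hle hadd hsub hB_smul hC_smul hX0
  rw [hadd, Pi.add_apply, hsub, Pi.sub_apply, hB_smul, hC_smul, condExp_const hm] at hle
  simp only [Pi.smul_apply, smul_eq_mul] at hle
  linarith [mul_nonneg hB hX0]

variable (μ) in
lemma exists_condExp_exp_neg_mul_le {η t : ℝ} (hη : 0 ≤ η) (ht : 0 ≤ t) :
    ∃ c, 0 ≤ c ∧ ∀ 𝒢 ≤ m0, ∀ X : Ω → ℝ, MemLp X 2 μ → (∀ᵐ ω ∂μ, -1 ≤ X ω) → 0 ≤ᵐ[μ] μ[X | 𝒢] →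
      ∀ᵐ ω ∂μ, (μ[fun ω ↦ exp (-(t * X ω)) | 𝒢]) ω ≤
        twoPointMGF η t * exp (-(c * η)) * exp (c * (μ[fun ω ↦ X ω ^ 2 | 𝒢]) ω) := by
  obtain ⟨B, C, hB, hC, hmajorant⟩ := exists_quadratic_majorant_exp hη ht
  have hG : 0 < twoPointMGF η t := twoPointMGF_pos hη
  refine ⟨C / twoPointMGF η t, by positivity, fun 𝒢 h𝒢 X hX hX1 hX0 ↦ ?_⟩
  have hquad : ∀ᵐ ω ∂μ, exp (-(t * X ω)) ≤ twoPointMGF η t - C * η - B * X ω + C * X ω ^ 2 := by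
    filter_upwards [hX1] with ω hω
    have := hmajorant (-X ω) (by linarith)
    rw [mul_neg, neg_sq] at this
    linarith
  filter_upwards [condExp_le_of_le_quadratic h𝒢
    (integrable_exp_neg_mul ht hX.aestronglyMeasurable hX1) hX hX0 hB hquad] with ω hω
  set v := (μ[fun ω ↦ X ω ^ 2 | 𝒢]) ω
  calc (μ[fun ω ↦ exp (-(t * X ω)) | 𝒢]) ω ≤ twoPointMGF η t - C * η + C * v := hω
    _ = twoPointMGF η t * (C / twoPointMGF η t * (v - η) + 1) := by
        field_simp
        ring
    _ ≤ twoPointMGF η t * exp (C / twoPointMGF η t * (v - η)) := by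
        gcongr
        exact add_one_le_exp _
    _ = _ := by
        rw [mul_assoc, ← exp_add]
        ring_nf

end ConditionalExpectation

section Freedman

variable {Ω : Type*} {m0 : MeasurableSpace Ω}

/-- The predictable quadratic variation `∑ ℓ = 1, …, n, E[(Z ℓ - Z (ℓ - 1))² | ℱ (ℓ - 1)]` of a
process `Z`. -/
noncomputable def predictableVariance (Z : ℕ → Ω → ℝ) (ℱ : Filtration ℕ m0) (μ : Measure Ω)
    (n : ℕ) (ω : Ω) : ℝ :=
  ∑ ℓ ∈ Finset.Icc 1 n, (μ[fun ω' ↦ (Z ℓ ω' - Z (ℓ - 1) ω') ^ 2 | ℱ (ℓ - 1)]) ω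

/-- Freedman's exponential process for the lower tail: the exponential of `-t` times the
displacement of `Z`, compensated at rate `c` by the predictable quadratic variation. -/
noncomputable def freedmanProcess (Z : ℕ → Ω → ℝ) (ℱ : Filtration ℕ m0) (μ : Measure Ω)
    (t c : ℝ) (n : ℕ) (ω : Ω) : ℝ :=
  exp (t * (Z 0 ω - Z n ω) - c * predictableVariance Z ℱ μ n ω)

variable {μ : Measure Ω} {ℱ : Filtration ℕ m0} {Z : ℕ → Ω → ℝ} {t c : ℝ} {n : ℕ}

lemma predictableVariance_succ (n : ℕ) (ω : Ω) :
    predictableVariance Z ℱ μ (n + 1) ω = predictableVariance Z ℱ μ n ω +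
      (μ[fun ω' ↦ (Z (n + 1) ω' - Z n ω') ^ 2 | ℱ n]) ω :=
  Finset.sum_Icc_succ_top (by lia) _

lemma predictableVariance_nonneg (n : ℕ) : ∀ᵐ ω ∂μ, 0 ≤ predictableVariance Z ℱ μ n ω := by
  have hterm : ∀ᵐ ω ∂μ, ∀ ℓ, 0 ≤ (μ[fun ω' ↦ (Z ℓ ω' - Z (ℓ - 1) ω') ^ 2 | ℱ (ℓ - 1)]) ω :=
    ae_all_iff.2 fun ℓ ↦ condExp_nonneg (ae_of_all _ fun ω ↦ sq_nonneg _)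
  filter_upwards [hterm] with ω hω using Finset.sum_nonneg fun ℓ _ ↦ hω ℓ

lemma stronglyMeasurable_predictableVariance (n : ℕ) :
    StronglyMeasurable[ℱ n] (predictableVariance Z ℱ μ n) :=
  Finset.stronglyMeasurable_fun_sum _ fun ℓ hℓ ↦
    stronglyMeasurable_condExp.mono (ℱ.mono (by grind))

lemma stronglyMeasurable_freedmanProcess (hZ : StronglyAdapted ℱ Z) (t c : ℝ) (n : ℕ) :
    StronglyMeasurable[ℱ n] (freedmanProcess Z ℱ μ t c n) :=
  continuous_exp.comp_stronglyMeasurable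
    (((((hZ 0).mono (ℱ.mono n.zero_le)).sub (hZ n)).const_mul t).sub
      ((stronglyMeasurable_predictableVariance n).const_mul c))

lemma aestronglyMeasurable_increment (hZ : StronglyAdapted ℱ Z) (i : ℕ) :
    AEStronglyMeasurable (fun ω ↦ Z (i + 1) ω - Z i ω) μ :=
  have hmeas (j : ℕ) : AEStronglyMeasurable (Z j) μ := ((hZ j).mono (ℱ.le j)).aestronglyMeasurable
  (hmeas (i + 1)).sub (hmeas i)

lemma sub_le_natCast_of_neg_one_le_increment
    (hZ1 : ∀ i < n, ∀ᵐ ω ∂μ, -1 ≤ Z (i + 1) ω - Z i ω) : ∀ᵐ ω ∂μ, Z 0 ω - Z n ω ≤ n := by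
  induction n with
  | zero => simp
  | succ n ih =>
    filter_upwards [ih fun i hi ↦ hZ1 i (by lia), hZ1 n (by lia)] with ω hω hstep
    push_cast
    linarith

lemma integrable_freedmanProcess [IsFiniteMeasure μ] (hZ : StronglyAdapted ℱ Z)
    (ht : 0 ≤ t) (hc : 0 ≤ c) (hZ1 : ∀ i < n, ∀ᵐ ω ∂μ, -1 ≤ Z (i + 1) ω - Z i ω) :
    Integrable (freedmanProcess Z ℱ μ t c n) μ := by
  refine Integrable.of_bound
    ((stronglyMeasurable_freedmanProcess hZ t c n).mono (ℱ.le n)).aestronglyMeasurable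
    (exp (t * n)) ?_
  filter_upwards [sub_le_natCast_of_neg_one_le_increment hZ1, predictableVariance_nonneg n]
    with ω hω hV
  rw [freedmanProcess, norm_of_nonneg (exp_pos _).le, exp_le_exp]
  linarith [mul_le_mul_of_nonneg_left hω ht, mul_nonneg hc hV]

lemma integral_freedmanProcess_succ_le [IsFiniteMeasure μ] {r : ℝ} (hZ : StronglyAdapted ℱ Z)
    (ht : 0 ≤ t) (hc : 0 ≤ c) (hZ1 : ∀ i < n + 1, ∀ᵐ ω ∂μ, -1 ≤ Z (i + 1) ω - Z i ω)
    (hstep : ∀ᵐ ω ∂μ, (μ[fun ω ↦ exp (-(t * (Z (n + 1) ω - Z n ω))) | ℱ n]) ω ≤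
      r * exp (c * (μ[fun ω ↦ (Z (n + 1) ω - Z n ω) ^ 2 | ℱ n]) ω)) :
    ∫ ω, freedmanProcess Z ℱ μ t c (n + 1) ω ∂μ ≤ r * ∫ ω, freedmanProcess Z ℱ μ t c n ω ∂μ := by
  set v := μ[fun ω ↦ (Z (n + 1) ω - Z n ω) ^ 2 | ℱ n]
  let Y : Ω → ℝ := fun ω ↦ freedmanProcess Z ℱ μ t c n ω * exp (-(c * v ω))
  have hY : StronglyMeasurable[ℱ n] Y := (stronglyMeasurable_freedmanProcess hZ t c n).mul
    (continuous_exp.comp_stronglyMeasurable (stronglyMeasurable_condExp.const_mul c).neg)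
  have hsucc : freedmanProcess Z ℱ μ t c (n + 1) =
      Y * fun ω ↦ exp (-(t * (Z (n + 1) ω - Z n ω))) := by
    ext ω
    simp only [Y, v, freedmanProcess, Pi.mul_apply, predictableVariance_succ, ← exp_add]
    ring_nf
  have hcomp : (Y * fun ω ↦ r * exp (c * v ω)) = fun ω ↦ r * freedmanProcess Z ℱ μ t c n ω := by
    ext ω
    simp only [Y, Pi.mul_apply, exp_neg]
    field_simp
  calc ∫ ω, freedmanProcess Z ℱ μ t c (n + 1) ω ∂μ
      ≤ ∫ ω, (Y * fun ω ↦ r * exp (c * v ω)) ω ∂μ := by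
        rw [hsucc]
        refine integral_mul_le_integral_mul_of_condExp_le (ℱ.le n) hY
          (ae_of_all _ fun ω ↦ (mul_pos (exp_pos _) (exp_pos _)).le)
          (integrable_exp_neg_mul ht (aestronglyMeasurable_increment hZ n) (hZ1 n n.lt_succ_self))
          ?_ ?_ hstep
        · rw [← hsucc]
          exact integrable_freedmanProcess hZ ht hc hZ1
        · rw [hcomp]
          exact (integrable_freedmanProcess hZ ht hc fun i hi ↦ hZ1 i (by lia)).const_mul r
    _ = r * ∫ ω, freedmanProcess Z ℱ μ t c n ω ∂μ := by rw [hcomp, integral_const_mul]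

lemma integral_freedmanProcess_le_pow [IsProbabilityMeasure μ] {r : ℝ} (hZ : StronglyAdapted ℱ Z)
    (ht : 0 ≤ t) (hc : 0 ≤ c) (hr : 0 ≤ r) (hZ1 : ∀ i < n, ∀ᵐ ω ∂μ, -1 ≤ Z (i + 1) ω - Z i ω)
    (hstep : ∀ i < n, ∀ᵐ ω ∂μ, (μ[fun ω ↦ exp (-(t * (Z (i + 1) ω - Z i ω))) | ℱ i]) ω ≤
      r * exp (c * (μ[fun ω ↦ (Z (i + 1) ω - Z i ω) ^ 2 | ℱ i]) ω)) :
    ∫ ω, freedmanProcess Z ℱ μ t c n ω ∂μ ≤ r ^ n := by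
  induction n with
  | zero => simp [freedmanProcess, predictableVariance]
  | succ n ih =>
    calc ∫ ω, freedmanProcess Z ℱ μ t c (n + 1) ω ∂μ
        ≤ r * ∫ ω, freedmanProcess Z ℱ μ t c n ω ∂μ :=
          integral_freedmanProcess_succ_le hZ ht hc hZ1 (hstep n n.lt_succ_self)
      _ ≤ r * r ^ n := by
          gcongr
          exact ih (fun i hi ↦ hZ1 i (by lia)) fun i hi ↦ hstep i (by lia)
      _ = r ^ (n + 1) := (pow_succ' r n).symm

lemma measureReal_lowerTail_le_exp_mul_integral [IsFiniteMeasure μ] (ht : 0 ≤ t) (hc : 0 ≤ c)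
    (hint : Integrable (freedmanProcess Z ℱ μ t c n) μ) (a b : ℝ) :
    μ.real {ω | Z n ω - Z 0 ω ≤ -a ∧ predictableVariance Z ℱ μ n ω ≤ b} ≤
      exp (-(t * a - c * b)) * ∫ ω, freedmanProcess Z ℱ μ t c n ω ∂μ := by
  have hsubset : {ω | Z n ω - Z 0 ω ≤ -a ∧ predictableVariance Z ℱ μ n ω ≤ b} ⊆
      {ω | exp (t * a - c * b) ≤ freedmanProcess Z ℱ μ t c n ω} := by
    rintro ω ⟨hω, hV⟩
    refine exp_le_exp.2 (sub_le_sub ?_ ?_)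
    · exact mul_le_mul_of_nonneg_left (by linarith) ht
    · exact mul_le_mul_of_nonneg_left hV hc
  rw [exp_neg, le_inv_mul_iff₀ (exp_pos _)]
  calc exp (t * a - c * b) *
        μ.real {ω | Z n ω - Z 0 ω ≤ -a ∧ predictableVariance Z ℱ μ n ω ≤ b}
      ≤ exp (t * a - c * b) *
        μ.real {ω | exp (t * a - c * b) ≤ freedmanProcess Z ℱ μ t c n ω} := by
        gcongr
        exact measure_ne_top _ _
    _ ≤ ∫ ω, freedmanProcess Z ℱ μ t c n ω ∂μ :=
        mul_meas_ge_le_integral_of_nonneg (ae_of_all _ fun ω ↦ (exp_pos _).le) hint _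

lemma measureReal_lowerTail_le_twoPointMGF_pow [IsProbabilityMeasure μ]
    (hZ : Submartingale Z ℱ μ) (hZ2 : ∀ i < n, MemLp (fun ω ↦ Z (i + 1) ω - Z i ω) 2 μ)
    (hZ1 : ∀ i < n, ∀ᵐ ω ∂μ, -1 ≤ Z (i + 1) ω - Z i ω) {η : ℝ} (hη : 0 ≤ η) (ht : 0 ≤ t) (δ : ℝ) :
    μ.real {ω | Z n ω - Z 0 ω ≤ -(n * δ) ∧ predictableVariance Z ℱ μ n ω ≤ n * η} ≤
      (twoPointMGF η t * exp (-(t * δ))) ^ n := by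
  obtain ⟨c, hc, hstep⟩ := exists_condExp_exp_neg_mul_le μ hη ht
  set r := twoPointMGF η t * exp (-(c * η)) with hr
  have hr0 : 0 ≤ r := mul_nonneg (twoPointMGF_pos hη).le (exp_pos _).le
  calc μ.real {ω | Z n ω - Z 0 ω ≤ -(n * δ) ∧ predictableVariance Z ℱ μ n ω ≤ n * η}
      ≤ exp (-(t * (n * δ) - c * (n * η))) * ∫ ω, freedmanProcess Z ℱ μ t c n ω ∂μ :=
        measureReal_lowerTail_le_exp_mul_integral ht hc
          (integrable_freedmanProcess hZ.stronglyAdapted ht hc hZ1) _ _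
    _ ≤ exp (-(t * (n * δ) - c * (n * η))) * r ^ n := by
        gcongr
        exact integral_freedmanProcess_le_pow hZ.stronglyAdapted ht hc hr0 hZ1 fun i hi ↦
          hstep (ℱ i) (ℱ.le i) _ (hZ2 i hi) (hZ1 i hi) (hZ.condExp_sub_nonneg i.le_succ)
    _ = (twoPointMGF η t * exp (-(t * δ))) ^ n := by
        rw [hr, mul_pow, mul_pow, ← exp_nat_mul, ← exp_nat_mul, mul_left_comm, ← exp_add]
        ring_nf

theorem theorem2_lower_tail_general [IsProbabilityMeasure μ] (k : ℕ)
    (hZ : Submartingale Z ℱ μ) (hZ2 : ∀ i < k, MemLp (fun ω ↦ Z (i + 1) ω - Z i ω) 2 μ)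
    (hZ1 : ∀ i < k, ∀ᵐ ω ∂μ, -1 ≤ Z (i + 1) ω - Z i ω)
    {η : ℝ} (hη : 0 < η) {δ : ℝ} (hδ0 : 0 ≤ δ) (hδ1 : δ < 1) :
    μ {ω | Z k ω - Z 0 ω ≤ -(k * δ) ∧ predictableVariance Z ℱ μ k ω ≤ k * η} ≤
      ENNReal.ofReal (piStar η δ k) := by
  obtain ⟨t, ht, hopt⟩ := exists_twoPointMGF_mul_exp_eq hη hδ0 hδ1
  rw [← ofReal_measureReal, piStar, mul_comm _ (k : ℝ), exp_nat_mul, ← hopt]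
  exact ENNReal.ofReal_le_ofReal (measureReal_lowerTail_le_twoPointMGF_pow hZ hZ2 hZ1 hη.le ht δ)

end Freedman

/-- **Theorem 2, lower tail, round-martingale form.** For a real-valued
martingale `(Z_ℓ)_{ℓ=0,…,k}` with `Z_0 = k·α`, increments bounded by `1` in absolute
value, and total conditional variance at most `k·η` almost surely, one has
`P[Z_k − Z_0 ≤ −k·δ] ≤ π*(η,δ,k)`. -/
theorem theorem2_lower_tail
    {Ω : Type*} {m0 : MeasurableSpace Ω} {μ : Measure Ω} [IsProbabilityMeasure μ]
    (ℱ : Filtration ℕ m0) (k : ℕ) (hk : 1 ≤ k)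
    (Z : ℕ → Ω → ℝ) (hmart : Martingale Z ℱ μ)
    (α : ℝ) (hα : α ∈ Set.Icc (0 : ℝ) 1)
    (hstart : ∀ᵐ ω ∂μ, Z 0 ω = k * α)
    (hdiff : ∀ ℓ, 1 ≤ ℓ → ℓ ≤ k → ∀ᵐ ω ∂μ, |Z ℓ ω - Z (ℓ - 1) ω| ≤ 1)
    (η : ℝ) (hη : 0 < η)
    (hvar : ∀ᵐ ω ∂μ,
      ∑ ℓ ∈ Finset.Icc 1 k,
        (μ[fun ω' => (Z ℓ ω' - Z (ℓ - 1) ω') ^ 2 | ℱ (ℓ - 1)]) ω ≤ k * η)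
    (δ : ℝ) (hδ0 : 0 < δ) (hδ1 : δ < 1) :
    μ {ω | Z k ω - Z 0 ω ≤ -(k * δ)} ≤ ENNReal.ofReal (piStar η δ k) := by
  have hincr (i : ℕ) (hi : i < k) := hdiff (i + 1) i.succ_pos hi
  exact (measure_mono_ae (hvar.mono fun ω hV hω ↦ ⟨hω, hV⟩)).trans
    (theorem2_lower_tail_general k hmart.submartingale
      (fun i hi ↦ .of_bound (aestronglyMeasurable_increment hmart.stronglyAdapted i) 1 (hincr i hi))
      (fun i hi ↦ (hincr i hi).mono fun _ ↦ neg_le_of_abs_le) hη hδ0.le hδ1)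
end

section
/- For all real numbers v > 0 and c > 0, one has (v/(v+c))^(v+c) · exp(c) ≤ exp(−(c²/2)/(v + c/3)). Consequently, for all η, δ > 0 and every positive integer k, π(η,δ,k) ≤ exp(−((δ²/2)/(η + δ/3))·k). -/
/-!
Writing `h x = x log x + 1 - x` for Mathlib's `klFun`, the left-hand side of the first inequality is
`exp (-v h(x))` and the right-hand side is `exp (-v q(x))`, where `x = (v + c) / v` and
`q x = 3 (x - 1)² / (2 (x + 2))`. So the claim is `q ≤ h` on `[0, ∞)`. The difference `h - q` is
convex, since `h'' - q'' = 1 / x - 27 / (x + 2)³ ≥ 0` is AM-GM for `x, 1, 1`, and it vanishes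
together with its derivative at `x = 1`.
-/

open Real

open Set InformationTheory

/-- The gap between the exponent `klFun x` of Bennett's inequality and its rational lower bound in
Bernstein's inequality, as a function of `x = (v + c) / v` so that it lives on `[0, ∞)`. -/
noncomputable def bernsteinGap (x : ℝ) : ℝ :=
  klFun x - 3 * (x - 1) ^ 2 / (2 * (x + 2))

theorem bernsteinGap_one : bernsteinGap 1 = 0 := by
  simp [bernsteinGap, klFun_one]

theorem continuousOn_bernsteinGap : ContinuousOn bernsteinGap (Ici 0) := by
  refine continuous_klFun.continuousOn.sub (ContinuousOn.div (by fun_prop) (by fun_prop) ?_)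
  intro x hx
  have : 0 ≤ x := hx
  positivity

theorem hasDerivAt_bernsteinGap {x : ℝ} (hx : 0 < x) :
    HasDerivAt bernsteinGap (log x - 3 / 2 * (1 - 9 / (x + 2) ^ 2)) x := by
  have hnum : HasDerivAt (fun y : ℝ => 3 * (y - 1) ^ 2) (6 * (x - 1)) x :=
    ((((hasDerivAt_id' x).sub_const 1).pow 2).const_mul 3).congr_deriv (by push_cast; ring)
  have hden : HasDerivAt (fun y : ℝ => 2 * (y + 2)) 2 x :=
    (((hasDerivAt_id x).add_const 2).const_mul 2).congr_deriv (mul_one 2)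
  refine ((hasDerivAt_klFun hx.ne').sub (hnum.div hden (by positivity))).congr_deriv ?_
  field_simp
  ring

theorem hasDerivAt_deriv_bernsteinGap {x : ℝ} (hx : 0 < x) :
    HasDerivAt (fun y => log y - 3 / 2 * (1 - 9 / (y + 2) ^ 2)) (1 / x - 27 / (x + 2) ^ 3) x := by
  have hsq : HasDerivAt (fun y : ℝ => (y + 2) ^ 2) (2 * (x + 2)) x :=
    (((hasDerivAt_id x).add_const 2).pow 2).congr_deriv (by simp)
  have hquot : HasDerivAt (fun y : ℝ => 9 / (y + 2) ^ 2) (-18 / (x + 2) ^ 3) x :=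
    ((hasDerivAt_const x 9).div hsq (by positivity)).congr_deriv (by field_simp; ring)
  refine ((hasDerivAt_log hx.ne').sub ((hquot.const_sub 1).const_mul (3 / 2))).congr_deriv ?_
  ring

theorem twentySeven_div_add_two_pow_three_le_one_div {x : ℝ} (hx : 0 < x) :
    27 / (x + 2) ^ 3 ≤ 1 / x := by
  have amgm : 27 * x ≤ (x + 2) ^ 3 :=
    calc 27 * x ≤ 27 * x + (x - 1) ^ 2 * (x + 8) := le_add_of_nonneg_right (by positivity)
      _ = (x + 2) ^ 3 := by ring
  rwa [div_le_div_iff₀ (by positivity) hx, one_mul]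

theorem convexOn_bernsteinGap : ConvexOn ℝ (Ici 0) bernsteinGap := by
  refine convexOn_of_hasDerivWithinAt2_nonneg (convex_Ici 0) continuousOn_bernsteinGap
    (f' := fun x => log x - 3 / 2 * (1 - 9 / (x + 2) ^ 2))
    (f'' := fun x => 1 / x - 27 / (x + 2) ^ 3) ?_ ?_ ?_ <;>
    rw [interior_Ici] <;> intro x hx
  · exact (hasDerivAt_bernsteinGap hx).hasDerivWithinAt
  · exact (hasDerivAt_deriv_bernsteinGap hx).hasDerivWithinAt
  · exact sub_nonneg.2 (twentySeven_div_add_two_pow_three_le_one_div hx)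

theorem isMinOn_bernsteinGap : IsMinOn bernsteinGap (Ici 0) 1 := by
  refine convexOn_bernsteinGap.isMinOn_of_rightDeriv_eq_zero (by simp) ?_
  rw [(hasDerivAt_bernsteinGap one_pos).hasDerivWithinAt.derivWithin (uniqueDiffWithinAt_Ioi 1)]
  norm_num

theorem three_mul_sq_div_le_klFun {x : ℝ} (hx : 0 ≤ x) :
    3 * (x - 1) ^ 2 / (2 * (x + 2)) ≤ klFun x :=
  sub_nonneg.1 (bernsteinGap_one ▸ isMinOn_bernsteinGap hx)

theorem div_rpow_mul_exp_sub_eq_exp_neg_mul_klFun {a b : ℝ} (ha : 0 < a) (hb : 0 < b) :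
    (a / b) ^ b * exp (b - a) = exp (-(a * klFun (b / a))) := by
  rw [rpow_def_of_pos (div_pos ha hb), ← exp_add, klFun_apply, ← inv_div b a, log_inv]
  congr 1
  field_simp
  ring

theorem div_add_rpow_mul_exp_le_exp {v c : ℝ} (hv : 0 < v) (hvc : 0 < v + c) :
    (v / (v + c)) ^ (v + c) * exp c ≤ exp (-(c ^ 2 / 2) / (v + c / 3)) := by
  have hden : 0 < v + c / 3 := by linarith
  have hexponent : v * (3 * ((v + c) / v - 1) ^ 2 / (2 * ((v + c) / v + 2))) =
      c ^ 2 / 2 / (v + c / 3) := by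
    have hx : (v + c) / v + 2 = 3 * (v + c / 3) / v := by field_simp; ring
    rw [hx, add_div, div_self hv.ne', add_sub_cancel_left]
    field_simp [hden.ne']
  calc (v / (v + c)) ^ (v + c) * exp c
      = exp (-(v * klFun ((v + c) / v))) := by
        simpa only [add_sub_cancel_left] using div_rpow_mul_exp_sub_eq_exp_neg_mul_klFun hv hvc
    _ ≤ exp (-(v * (3 * ((v + c) / v - 1) ^ 2 / (2 * ((v + c) / v + 2))))) := by
        gcongr
        exact three_mul_sq_div_le_klFun (by positivity)
    _ = exp (-(c ^ 2 / 2) / (v + c / 3)) := by rw [hexponent, neg_div]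

theorem piBound_le_exp {η δ : ℝ} (hη : 0 < η) (hηδ : 0 < η + δ) (k : ℕ) :
    piBound η δ k ≤ exp (-(δ ^ 2 / 2 / (η + δ / 3)) * k) :=
  calc piBound η δ k
      ≤ exp (-(δ ^ 2 / 2) / (η + δ / 3)) ^ k :=
        pow_le_pow_left₀ (by positivity) (div_add_rpow_mul_exp_le_exp hη hηδ) k
    _ = exp (-(δ ^ 2 / 2 / (η + δ / 3)) * k) := by rw [← exp_nat_mul, neg_div, mul_comm]

theorem freedman_bound_le_bernstein_general :
    (∀ v c : ℝ, 0 < v → 0 < v + c →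
      (v / (v + c)) ^ (v + c) * exp c ≤ exp (-(c ^ 2 / 2) / (v + c / 3))) ∧
    (∀ η δ : ℝ, 0 < η → 0 < η + δ → ∀ k : ℕ,
      piBound η δ k ≤ exp (-(δ ^ 2 / 2 / (η + δ / 3)) * k)) :=
  ⟨fun _ _ => div_add_rpow_mul_exp_le_exp, fun _ _ => piBound_le_exp⟩

/-- For all `v, c > 0`,
`(v/(v+c))^(v+c)·exp c ≤ exp(−(c²/2)/(v+c/3))`; consequently, for all `η, δ > 0` and
positive integers `k`, `π(η,δ,k) ≤ exp(−((δ²/2)/(η+δ/3))·k)`. -/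
theorem freedman_bound_le_bernstein :
    (∀ v c : ℝ, 0 < v → 0 < c →
      (v / (v + c)) ^ (v + c) * Real.exp c ≤ Real.exp (-(c ^ 2 / 2) / (v + c / 3))) ∧
    (∀ η δ : ℝ, 0 < η → 0 < δ → ∀ k : ℕ, 0 < k →
      piBound η δ k ≤ Real.exp (-(δ ^ 2 / 2 / (η + δ / 3)) * k)) :=
  ⟨fun v c hv hc => freedman_bound_le_bernstein_general.1 v c hv (add_pos hv hc),
    fun η δ hη hδ k _ => freedman_bound_le_bernstein_general.2 η δ hη (add_pos hη hδ) k⟩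
end

section
/- (Monotonicity of the Fan–Grama–Liu bound in the variance parameter.) For every fixed δ with 0 < δ < 1, the function η ↦ D((η+δ)/(1+η) ‖ η/(1+η)) is nonincreasing on (0,∞). Consequently, for every positive integer k, π*(η,δ,k) := exp(−D((η+δ)/(1+η) ‖ η/(1+η))·k) is nondecreasing in η. -/
open Real

/-!
Put `t = (1 + η₁) / (1 + η₂)` for `η₁ ≤ η₂`. Then `(η₂ + δ) / (1 + η₂)` is the mixture of
`(η₁ + δ) / (1 + η₁)` and `1` with weights `t` and `1 - t`, and the same holds for the reference
parameter `η / (1 + η)`, which is the case `δ = 0`. Mixing two Bernoulli distributions with the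
same point mass at `1` multiplies their divergence by at most `t`, by the log-sum inequality, and
the divergence is nonnegative while `t ≤ 1`.
-/

theorem sum_mul_log_div_sum_le {ι : Type*} (s : Finset ι) {a b : ι → ℝ}
    (ha : ∀ i ∈ s, 0 ≤ a i) (hb : ∀ i ∈ s, 0 ≤ b i) (hab : ∀ i ∈ s, b i = 0 → a i = 0) :
    (∑ i ∈ s, a i) * log ((∑ i ∈ s, a i) / ∑ i ∈ s, b i) ≤
      ∑ i ∈ s, a i * log (a i / b i) := by
  have hcancel : ∀ i ∈ s, b i * (a i / b i) = a i := fun i hi =>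
    mul_div_cancel_of_imp' (hab i hi)
  rcases (Finset.sum_nonneg hb).eq_or_lt with hB | hB
  · have hb0 := (Finset.sum_eq_zero_iff_of_nonneg hb).1 hB.symm
    have hterm : ∀ i ∈ s, a i * log (a i / b i) = 0 := fun i hi => by simp [hb0 i hi]
    simp [← hB, Finset.sum_eq_zero hterm]
  · have jensen := convexOn_mul_log.map_centerMass_le hb hB
      fun i hi => div_nonneg (ha i hi) (hb i hi)
    have hterm : ∀ i ∈ s, b i * (a i / b i) * log (a i / b i) = a i * log (a i / b i) :=
      fun i hi => by rw [hcancel i hi]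
    simp only [Finset.centerMass, smul_eq_mul, Function.comp_apply, ← mul_assoc] at jensen
    rw [Finset.sum_congr rfl hcancel, Finset.sum_congr rfl hterm, mul_assoc,
      inv_mul_eq_div _ (∑ i ∈ s, a i)] at jensen
    exact le_of_mul_le_mul_left jensen (inv_pos.2 hB)

theorem add_mul_log_div_add_le {a₁ a₂ b₁ b₂ : ℝ} (ha₁ : 0 ≤ a₁) (ha₂ : 0 ≤ a₂)
    (hb₁ : 0 ≤ b₁) (hb₂ : 0 ≤ b₂) (h₁ : b₁ = 0 → a₁ = 0) (h₂ : b₂ = 0 → a₂ = 0) :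
    (a₁ + a₂) * log ((a₁ + a₂) / (b₁ + b₂)) ≤ a₁ * log (a₁ / b₁) + a₂ * log (a₂ / b₂) := by
  simpa using sum_mul_log_div_sum_le Finset.univ (a := ![a₁, a₂]) (b := ![b₁, b₂])
    (by simp [ha₁, ha₂]) (by simp [hb₁, hb₂]) (by simpa using ⟨h₁, h₂⟩)

theorem klDiv_nonneg {q p : ℝ} (hq : q ∈ Set.Icc 0 1) (hp : p ∈ Set.Ioo 0 1) :
    0 ≤ klDiv q p := by
  simpa [klDiv] using add_mul_log_div_add_le hq.1 (sub_nonneg.2 hq.2) hp.1.le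
    (sub_nonneg.2 hp.2.le) (fun h => absurd h hp.1.ne') fun h => absurd h (sub_pos.2 hp.2).ne'

theorem klDiv_mul_add_one_sub_le {q p t : ℝ} (hq : 0 ≤ q) (hp : 0 < p)
    (ht₀ : 0 < t) (ht₁ : t ≤ 1) :
    klDiv (t * q + (1 - t)) (t * p + (1 - t)) ≤ t * klDiv q p := by
  have hsucc : (t * q + (1 - t)) * log ((t * q + (1 - t)) / (t * p + (1 - t))) ≤
      t * q * log (q / p) := by
    have hlogsum := add_mul_log_div_add_le (mul_nonneg ht₀.le hq) (sub_nonneg.2 ht₁)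
      (mul_pos ht₀ hp).le (sub_nonneg.2 ht₁) (fun h => absurd h (mul_pos ht₀ hp).ne') id
    have hlog : log ((1 - t) / (1 - t)) = 0 := by
      rcases eq_or_ne (1 - t) 0 with h | h <;> simp [h]
    rwa [mul_div_mul_left _ _ ht₀.ne', hlog, mul_zero, add_zero] at hlogsum
  have hcompl (x : ℝ) : 1 - (t * x + (1 - t)) = t * (1 - x) := by ring
  rw [klDiv, klDiv, hcompl, hcompl, mul_div_mul_left _ _ ht₀.ne']
  linarith

theorem add_div_one_add_eq_mul_add_one_sub {η₁ η₂ : ℝ} (h₁ : 1 + η₁ ≠ 0) (h₂ : 1 + η₂ ≠ 0)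
    (δ : ℝ) :
    (η₂ + δ) / (1 + η₂) =
      (1 + η₁) / (1 + η₂) * ((η₁ + δ) / (1 + η₁)) + (1 - (1 + η₁) / (1 + η₂)) := by
  field_simp
  ring

theorem antitoneOn_klDiv_add_div_one_add {δ : ℝ} (hδ : δ ≤ 1) :
    AntitoneOn (fun η : ℝ => klDiv ((η + δ) / (1 + η)) (η / (1 + η)))
      (Set.Ioi 0 ∩ Set.Ici (-δ)) := by
  rintro η₁ ⟨hη₁ : 0 < η₁, hδη₁ : -δ ≤ η₁⟩ η₂ ⟨hη₂ : 0 < η₂, -⟩ hle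
  have hpos₁ : 0 < 1 + η₁ := by positivity
  have hpos₂ : 0 < 1 + η₂ := by positivity
  have hq : (η₁ + δ) / (1 + η₁) ∈ Set.Icc 0 1 :=
    ⟨div_nonneg (by linarith) hpos₁.le, (div_le_one hpos₁).2 (by linarith)⟩
  have hp : η₁ / (1 + η₁) ∈ Set.Ioo 0 1 :=
    ⟨div_pos hη₁ hpos₁, (div_lt_one hpos₁).2 (by linarith)⟩
  have ht : (1 + η₁) / (1 + η₂) ≤ 1 := (div_le_one hpos₂).2 (by linarith)
  have hmix := add_div_one_add_eq_mul_add_one_sub hpos₁.ne' hpos₂.ne'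
  calc klDiv ((η₂ + δ) / (1 + η₂)) (η₂ / (1 + η₂))
      ≤ (1 + η₁) / (1 + η₂) * klDiv ((η₁ + δ) / (1 + η₁)) (η₁ / (1 + η₁)) := by
        have hmix₀ := hmix 0
        simp only [add_zero] at hmix₀
        rw [hmix δ, hmix₀]
        exact klDiv_mul_add_one_sub_le hq.1 hp.1 (div_pos hpos₁ hpos₂) ht
    _ ≤ klDiv ((η₁ + δ) / (1 + η₁)) (η₁ / (1 + η₁)) :=
        mul_le_of_le_one_left (klDiv_nonneg hq hp) ht

theorem piStar_monotone_general {δ : ℝ} (hδ : δ ≤ 1) :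
    AntitoneOn (fun η : ℝ => klDiv ((η + δ) / (1 + η)) (η / (1 + η)))
      (Set.Ioi 0 ∩ Set.Ici (-δ)) ∧
    ∀ k : ℕ, MonotoneOn (fun η : ℝ => piStar η δ k) (Set.Ioi 0 ∩ Set.Ici (-δ)) := by
  have hanti := antitoneOn_klDiv_add_div_one_add hδ
  refine ⟨hanti, fun k η₁ h₁ η₂ h₂ hle => exp_le_exp.2 ?_⟩
  exact mul_le_mul_of_nonneg_right (neg_le_neg (hanti h₁ h₂ hle)) k.cast_nonneg

/-- **Monotonicity of the Fan–Grama–Liu bound in the variance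
parameter.** For fixed `0 < δ < 1`, `η ↦ D((η+δ)/(1+η) ‖ η/(1+η))` is nonincreasing
on `(0,∞)`, and consequently `π*(η,δ,k)` is nondecreasing in `η` for every positive
integer `k`. -/
theorem piStar_monotone (δ : ℝ) (hδ0 : 0 < δ) (hδ1 : δ < 1) :
    AntitoneOn (fun η : ℝ => klDiv ((η + δ) / (1 + η)) (η / (1 + η))) (Set.Ioi 0) ∧
    (∀ k : ℕ, 0 < k → MonotoneOn (fun η : ℝ => piStar η δ k) (Set.Ioi 0)) := by
  have hsub : Set.Ioi 0 ⊆ Set.Ioi 0 ∩ Set.Ici (-δ) := fun η (hη : 0 < η) =>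
    ⟨hη, ((neg_neg_of_pos hδ0).trans hη).le⟩
  obtain ⟨hanti, hmono⟩ := piStar_monotone_general hδ1.le
  exact ⟨hanti.mono hsub, fun k _ => (hmono k).mono hsub⟩
end

section
/- (Sharpened Pinsker inequality.) Let p ∈ (0,1) with p ≠ 1/2, and set C(p) := (1/(1−2p))·ln((1−p)/p), so that C(p) = D(1−p‖p)/(1−2p)². Then for every q ∈ (0,1) with q ≠ p, D(q‖p)/(q−p)² ≥ C(p), with equality when q = 1−p; that is, the function q ↦ D(q‖p)/(q−p)² on (0,1)∖{p} attains its minimum at q = 1−p, and hence D(q‖p) ≥ C(p)·(q−p)² for all q ∈ (0,1). -/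
open Real

/-! With `x = (1 - 2q)²` one has `D(q‖1/2) = ∑ xᵏ⁺¹ / ((2k+1)(2k+2))`, which is convex in `x`.
For `y = (1 - 2p)²`, the derivative of this series at `y` is `C(p) / 4`, and
`D(q‖p) - C(p) (q - p)²` is exactly the gap at `x` between the series and its tangent at `y`. The
gap is nonnegative by convexity of each term, and it vanishes at `q = 1 - p` because there `x = y`.
-/

/-- The constant `C(p)` of the sharpened Pinsker inequality, the best one in
`C(p) * (q - p) ^ 2 ≤ D(q‖p)`. Compared with the closed form `ln((1-p)/p) / (1-2p)`, the series also
covers `p = 1/2`, where it gives the constant `2` of the classical inequality. -/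
noncomputable def pinskerConst (p : ℝ) : ℝ :=
  ∑' k : ℕ, 2 / (2 * k + 1) * ((1 - 2 * p) ^ 2) ^ k

lemma add_one_mul_pow_mul_sub_le {R : Type*} [CommRing R] [LinearOrder R] [IsStrictOrderedRing R]
    {x y : R} (hx : 0 ≤ x) (hy : 0 ≤ y) (n : ℕ) :
    (n + 1) * y ^ n * (x - y) ≤ x ^ (n + 1) - y ^ (n + 1) := by
  have hbernoulli := pow_add_mul_le_add_pow hy (b := x - y) (by linarith) (n + 1)
  rw [add_sub_cancel, add_tsub_cancel_right, Nat.cast_add_one] at hbernoulli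
  linarith

lemma klDiv_one_sub_self (p : ℝ) : klDiv (1 - p) p = (1 - 2 * p) * log ((1 - p) / p) := by
  have hlog : log (p / (1 - p)) = -log ((1 - p) / p) := by rw [← log_inv, inv_div]
  rw [klDiv, sub_sub_cancel, hlog]
  ring

section

variable {p q r : ℝ}

lemma klDiv_eq_sub_log (hq : q ∈ Set.Ioo (0 : ℝ) 1) (hp : p ∈ Set.Ioo (0 : ℝ) 1) :
    klDiv q p = q * (log q - log p) + (1 - q) * (log (1 - q) - log (1 - p)) := by
  rw [klDiv, log_div hq.1.ne' hp.1.ne', log_div (sub_pos.2 hq.2).ne' (sub_pos.2 hp.2).ne']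

lemma klDiv_sub_klDiv (hq : q ∈ Set.Ioo (0 : ℝ) 1) (hp : p ∈ Set.Ioo (0 : ℝ) 1)
    (hr : r ∈ Set.Ioo (0 : ℝ) 1) :
    klDiv q r - klDiv p r = klDiv q p + (q - p) * (log ((1 - r) / r) - log ((1 - p) / p)) := by
  rw [klDiv_eq_sub_log hq hr, klDiv_eq_sub_log hp hr, klDiv_eq_sub_log hq hp,
    log_div (sub_pos.2 hr.2).ne' hr.1.ne', log_div (sub_pos.2 hp.2).ne' hp.1.ne']
  ring

lemma klDiv_half (hq : q ∈ Set.Ioo (0 : ℝ) 1) :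
    klDiv q (1 / 2) =
      (1 - 2 * q) / 2 * log ((1 - q) / q) + log (1 - (1 - 2 * q) ^ 2) / 2 := by
  have hq₀ : q ≠ 0 := hq.1.ne'
  have hq₁ : 1 - q ≠ 0 := (sub_pos.2 hq.2).ne'
  have hquad : 1 - (1 - 2 * q) ^ 2 = (q / (1 / 2)) * ((1 - q) / (1 - 1 / 2)) := by ring
  rw [hquad, log_mul (by positivity) (div_ne_zero hq₁ (by norm_num)), klDiv, log_div hq₁ hq₀,
    log_div hq₀ (by norm_num), log_div hq₁ (by norm_num)]
  ring_nf

lemma abs_one_sub_two_mul_lt_one (hp : p ∈ Set.Ioo (0 : ℝ) 1) : |1 - 2 * p| < 1 :=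
  abs_lt.2 ⟨by linarith [hp.2], by linarith [hp.1]⟩

lemma one_sub_two_mul_sq_lt_one (hp : p ∈ Set.Ioo (0 : ℝ) 1) : (1 - 2 * p) ^ 2 < 1 :=
  (sq_lt_one_iff_abs_lt_one _).2 (abs_one_sub_two_mul_lt_one hp)

lemma hasSum_pinskerConst (hp : p ∈ Set.Ioo (0 : ℝ) 1) :
    HasSum (fun k : ℕ ↦ 2 / (2 * k + 1) * ((1 - 2 * p) ^ 2) ^ k) (pinskerConst p) := by
  have hgeom := summable_geometric_of_lt_one (sq_nonneg _) (one_sub_two_mul_sq_lt_one hp)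
  refine (Summable.of_nonneg_of_le (fun k ↦ by positivity) (fun k ↦ ?_) (hgeom.mul_left 2)).hasSum
  gcongr
  exact div_le_self zero_le_two (by linarith [k.cast_nonneg (α := ℝ)])

lemma hasSum_log_one_sub_div (hp : p ∈ Set.Ioo (0 : ℝ) 1) :
    HasSum (fun k : ℕ ↦ 2 / (2 * k + 1) * (1 - 2 * p) ^ (2 * k + 1)) (log ((1 - p) / p)) := by
  have hlog : log (1 + (1 - 2 * p)) - log (1 - (1 - 2 * p)) = log ((1 - p) / p) := by
    rw [← log_div (by linarith [hp.2]) (by linarith [hp.1]),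
      ← mul_div_mul_left (1 - p) p two_ne_zero]
    ring_nf
  simpa only [hlog, mul_one_div] using
    hasSum_log_sub_log_of_abs_lt_one (abs_one_sub_two_mul_lt_one hp)

lemma log_one_sub_div_eq_mul_pinskerConst (hp : p ∈ Set.Ioo (0 : ℝ) 1) :
    log ((1 - p) / p) = (1 - 2 * p) * pinskerConst p := by
  refine (hasSum_log_one_sub_div hp).unique
    (((hasSum_pinskerConst hp).mul_left (1 - 2 * p)).congr_fun fun k ↦ ?_)
  rw [pow_succ _ (2 * k), pow_mul]
  ring

lemma hasSum_klDiv_half (hq : q ∈ Set.Ioo (0 : ℝ) 1) :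
    HasSum (fun k : ℕ ↦ ((1 - 2 * q) ^ 2) ^ (k + 1) / ((2 * k + 1) * (2 * k + 2)))
      (klDiv q (1 / 2)) := by
  have hsq : |(1 - 2 * q) ^ 2| < 1 := by
    rw [abs_sq]
    exact one_sub_two_mul_sq_lt_one hq
  have hsum := ((hasSum_log_one_sub_div hq).mul_left ((1 - 2 * q) / 2)).sub
    ((hasSum_pow_div_log_of_abs_lt_one hsq).div_const 2)
  rw [neg_div, sub_neg_eq_add, ← klDiv_half hq] at hsum
  refine hsum.congr_fun fun k ↦ ?_
  rw [pow_succ _ (2 * k), pow_mul]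
  field_simp
  ring

lemma pinskerConst_div_four_mul_le_klDiv_half_sub (hq : q ∈ Set.Ioo (0 : ℝ) 1)
    (hp : p ∈ Set.Ioo (0 : ℝ) 1) :
    pinskerConst p / 4 * ((1 - 2 * q) ^ 2 - (1 - 2 * p) ^ 2) ≤
      klDiv q (1 / 2) - klDiv p (1 / 2) := by
  refine hasSum_le (fun k ↦ ?_) (((hasSum_pinskerConst hp).div_const 4).mul_right _)
    ((hasSum_klDiv_half hq).sub (hasSum_klDiv_half hp))
  calc
    2 / (2 * k + 1) * ((1 - 2 * p) ^ 2) ^ k / 4 * ((1 - 2 * q) ^ 2 - (1 - 2 * p) ^ 2) =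
        (k + 1) * ((1 - 2 * p) ^ 2) ^ k * ((1 - 2 * q) ^ 2 - (1 - 2 * p) ^ 2) /
          ((2 * k + 1) * (2 * k + 2)) := by
      field_simp
      ring
    _ ≤ (((1 - 2 * q) ^ 2) ^ (k + 1) - ((1 - 2 * p) ^ 2) ^ (k + 1)) /
          ((2 * k + 1) * (2 * k + 2)) := by
      gcongr
      exact add_one_mul_pow_mul_sub_le (sq_nonneg _) (sq_nonneg _) k
    _ = _ := sub_div _ _ _

lemma klDiv_sub_pinskerConst_mul_sq (hq : q ∈ Set.Ioo (0 : ℝ) 1) (hp : p ∈ Set.Ioo (0 : ℝ) 1) :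
    klDiv q p - pinskerConst p * (q - p) ^ 2 =
      klDiv q (1 / 2) - klDiv p (1 / 2) -
        pinskerConst p / 4 * ((1 - 2 * q) ^ 2 - (1 - 2 * p) ^ 2) := by
  have hbregman := klDiv_sub_klDiv hq hp (r := 1 / 2) ⟨by norm_num, by norm_num⟩
  have hhalf : log ((1 - 1 / 2) / (1 / 2) : ℝ) = 0 := by norm_num
  rw [hhalf, log_one_sub_div_eq_mul_pinskerConst hp] at hbregman
  linear_combination -hbregman

lemma pinskerConst_mul_sq_le_klDiv (hq : q ∈ Set.Ioo (0 : ℝ) 1) (hp : p ∈ Set.Ioo (0 : ℝ) 1) :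
    pinskerConst p * (q - p) ^ 2 ≤ klDiv q p := by
  rw [← sub_nonneg, klDiv_sub_pinskerConst_mul_sq hq hp, sub_nonneg]
  exact pinskerConst_div_four_mul_le_klDiv_half_sub hq hp

end

/-- **Sharpened Pinsker inequality.** For `p ∈ (0,1)`, `p ≠ 1/2`, and
`C(p) := (1/(1−2p))·ln((1−p)/p)`, one has `C(p) = D(1−p‖p)/(1−2p)²`; the function
`q ↦ D(q‖p)/(q−p)²` on `(0,1)∖{p}` is at least `C(p)`, with equality at `q = 1−p`
(i.e. it attains its minimum there); hence `D(q‖p) ≥ C(p)·(q−p)²` for all `q ∈ (0,1)`. -/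
theorem sharpened_pinsker (p : ℝ) (hp : p ∈ Set.Ioo (0 : ℝ) 1) (hp2 : p ≠ 1 / 2)
    (C : ℝ) (hC : C = (1 / (1 - 2 * p)) * Real.log ((1 - p) / p)) :
    C = klDiv (1 - p) p / (1 - 2 * p) ^ 2 ∧
    (∀ q ∈ Set.Ioo (0 : ℝ) 1, q ≠ p → C ≤ klDiv q p / (q - p) ^ 2) ∧
    klDiv (1 - p) p / ((1 - p) - p) ^ 2 = C ∧
    (∀ q ∈ Set.Ioo (0 : ℝ) 1, C * (q - p) ^ 2 ≤ klDiv q p) := by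
  have hs : 1 - 2 * p ≠ 0 := fun h ↦ hp2 (by linarith)
  have hconst : C = pinskerConst p := by
    rw [hC, log_one_sub_div_eq_mul_pinskerConst hp, one_div, inv_mul_cancel_left₀ hs]
  have hmin : C = klDiv (1 - p) p / (1 - 2 * p) ^ 2 := by
    rw [hC, klDiv_one_sub_self]
    field_simp
  have hle (q : ℝ) (hq : q ∈ Set.Ioo (0 : ℝ) 1) : C * (q - p) ^ 2 ≤ klDiv q p :=
    hconst ▸ pinskerConst_mul_sq_le_klDiv hq hp
  refine ⟨hmin, fun q hq hqp ↦ ?_, ?_, hle⟩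
  · exact (le_div_iff₀ (sq_pos_of_ne_zero (sub_ne_zero.2 hqp))).2 (hle q hq)
  · rw [hmin]
    ring
end

section
/- (Freedman's inequality, a.s.-bounded-variance form.) Let (M_t)_{t=0,…,T} be a real-valued martingale adapted to a filtration (F_t) whose differences Y_t := M_t − M_{t−1} satisfy |Y_t| ≤ 1 almost surely for every t, and suppose Σ_{t=1}^T E[Y_t² | F_{t−1}] ≤ v almost surely for a constant v > 0. Then for every c > 0, P[M_T − M_0 ≥ c] ≤ (v/(v+c))^(v+c)·exp(c). -/
open MeasureTheory ProbabilityTheory Real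

/-!
Put `φ(l) = eˡ - 1 - l`. For `l ≥ 0` and an increment `Y ≤ 1`, `exp (l Y) ≤ 1 + l Y + φ(l) Y²`;
conditionally on the past the linear term has nonpositive mean, so
`E[exp (l Y) | past] ≤ 1 + φ(l) E[Y² | past] ≤ exp (φ(l) E[Y² | past])`. With `V` the sum of the
conditional second moments, the process `exp (l (M_n - M_0) - φ(l) V_n)` is therefore a
supermartingale started at `1`. Markov's inequality bounds the probability that `M_T - M_0 ≥ c`
and `V_T ≤ v` by `exp (φ(l) v - l c)`, and `l = log ((v + c) / v)` is optimal.
-/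

section ExpRemainder

/-- The remainder `eˣ - 1 - x` of the first-order expansion of the exponential: the factor by which
a conditional second moment enters the compensator of an exponential martingale. -/
noncomputable def expRemainder (x : ℝ) : ℝ := exp x - 1 - x

theorem expRemainder_nonneg (x : ℝ) : 0 ≤ expRemainder x := by
  unfold expRemainder
  linarith [add_one_le_exp x]

theorem hasSum_expRemainder (x : ℝ) :
    HasSum (fun k : ℕ => x ^ (k + 2) / (k + 2).factorial) (expRemainder x) := by
  have hsum : HasSum (fun k : ℕ => x ^ k / k.factorial) (exp x) := by
    rw [exp_eq_exp_ℝ]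
    exact NormedSpace.expSeries_div_hasSum_exp x
  simpa [expRemainder, Finset.sum_range_succ, sub_sub] using (hasSum_nat_add_iff' 2).2 hsum

theorem sq_div_two_le_expRemainder {x : ℝ} (hx : 0 ≤ x) : x ^ 2 / 2 ≤ expRemainder x := by
  unfold expRemainder
  linarith [quadratic_le_exp_of_nonneg hx]

theorem expRemainder_le_sq_div_two {x : ℝ} (hx : x ≤ 0) : expRemainder x ≤ x ^ 2 / 2 := by
  have hexp_neg : 1 - x + x ^ 2 / 2 ≤ exp (-x) := by
    linarith [quadratic_le_exp_of_nonneg (neg_nonneg.2 hx), neg_sq x]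
  have hpos : 0 < 1 - x + x ^ 2 / 2 := by nlinarith
  suffices exp x ≤ 1 + x + x ^ 2 / 2 by
    unfold expRemainder
    linarith
  calc
    exp x = (exp (-x))⁻¹ := by rw [exp_neg, inv_inv]
    _ ≤ (1 - x + x ^ 2 / 2)⁻¹ := inv_anti₀ hpos hexp_neg
    _ ≤ 1 + x + x ^ 2 / 2 := by
      rw [inv_le_iff_one_le_mul₀ hpos]
      nlinarith [sq_nonneg (x ^ 2)]

theorem expRemainder_mul_le {l y : ℝ} (hl : 0 ≤ l) (hy : y ≤ 1) :
    expRemainder (l * y) ≤ expRemainder l * y ^ 2 := by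
  rcases le_total y 0 with hy₀ | hy₀
  · calc
      expRemainder (l * y) ≤ (l * y) ^ 2 / 2 :=
        expRemainder_le_sq_div_two (mul_nonpos_of_nonneg_of_nonpos hl hy₀)
      _ = l ^ 2 / 2 * y ^ 2 := by ring
      _ ≤ expRemainder l * y ^ 2 := by gcongr; exact sq_div_two_le_expRemainder hl
  · refine hasSum_le (fun k => ?_) (hasSum_expRemainder (l * y))
      ((hasSum_expRemainder l).mul_right (y ^ 2))
    have hpow : y ^ (k + 2) ≤ y ^ 2 := pow_le_pow_of_le_one hy₀ hy (by lia)
    calc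
      (l * y) ^ (k + 2) / (k + 2).factorial = l ^ (k + 2) / (k + 2).factorial * y ^ (k + 2) := by
        ring
      _ ≤ l ^ (k + 2) / (k + 2).factorial * y ^ 2 := by gcongr

theorem exp_mul_le_one_add {l y : ℝ} (hl : 0 ≤ l) (hy : y ≤ 1) :
    exp (l * y) ≤ 1 + l * y + expRemainder l * y ^ 2 := by
  have h := expRemainder_mul_le hl hy
  rw [expRemainder] at h
  linarith

theorem exp_expRemainder_log_mul_sub {v c : ℝ} (hv : 0 < v) (hvc : 0 < v + c) :
    exp (expRemainder (log ((v + c) / v)) * v - log ((v + c) / v) * c) =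
      (v / (v + c)) ^ (v + c) * exp c := by
  have hlog : log (v / (v + c)) = -log ((v + c) / v) := by rw [← log_inv, inv_div]
  rw [rpow_def_of_pos (div_pos hv hvc), ← exp_add, hlog, expRemainder,
    exp_log (div_pos hvc hv)]
  congr 1
  field_simp
  ring

end ExpRemainder

theorem condExp_exp_mul_le {Ω : Type*} {m m0 : MeasurableSpace Ω} {μ : Measure Ω}
    [IsFiniteMeasure μ] (hm : m ≤ m0) {Y : Ω → ℝ} {l : ℝ} (hl : 0 ≤ l) (hY : MemLp Y 2 μ)
    (hY_le : ∀ᵐ ω ∂μ, Y ω ≤ 1) (hY_mean : μ[Y | m] ≤ᵐ[μ] 0) :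
    μ[fun ω => exp (l * Y ω) | m] ≤ᵐ[μ]
      fun ω => exp (expRemainder l * μ[fun ω' => Y ω' ^ 2 | m] ω) := by
  have hlin : Integrable (l • Y) μ := (hY.integrable one_le_two).smul l
  have hquad : Integrable (expRemainder l • fun ω => Y ω ^ 2) μ :=
    hY.integrable_sq.smul (expRemainder l)
  have hone : Integrable (fun _ => (1 : ℝ)) μ := integrable_const 1
  have hmono : μ[fun ω => exp (l * Y ω) | m] ≤ᵐ[μ]
      μ[(fun _ => (1 : ℝ)) + l • Y + expRemainder l • (fun ω => Y ω ^ 2) | m] := by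
    refine condExp_mono (integrable_exp_mul_of_le l 1 hl hY.1.aemeasurable hY_le)
      ((hone.add hlin).add hquad) ?_
    filter_upwards [hY_le] with ω hω using exp_mul_le_one_add hl hω
  filter_upwards [hmono, condExp_add (hone.add hlin) hquad m, condExp_add hone hlin m,
    condExp_smul l Y m, condExp_smul (expRemainder l) (fun ω => Y ω ^ 2) m, hY_mean]
    with ω hω hadd hadd' hsmul hsmul' hmean
  simp only [hadd, hadd', hsmul, hsmul', condExp_const hm, Pi.add_apply, Pi.smul_apply,
    smul_eq_mul, Pi.zero_apply] at hω hmean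
  have hdrift := mul_nonpos_of_nonneg_of_nonpos hl hmean
  linarith [add_one_le_exp (expRemainder l * μ[fun ω' => Y ω' ^ 2 | m] ω)]

section QuadVar

variable {Ω : Type*} {m0 : MeasurableSpace Ω} {μ : Measure Ω} {ℱ : Filtration ℕ m0}
  {M : ℕ → Ω → ℝ} {l : ℝ} {n : ℕ}

/-- The predictable quadratic variation `∑_{t=1}^n E[(M_t - M_{t-1})² | ℱ_{t-1}]` of a
discrete-time process. The sum starts at `t = 1`, so the subtraction `t - 1` is never truncated. -/
noncomputable def predictableQuadVar (M : ℕ → Ω → ℝ) (ℱ : Filtration ℕ m0) (μ : Measure Ω)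
    (n : ℕ) (ω : Ω) : ℝ :=
  ∑ t ∈ Finset.Icc 1 n, (μ[fun ω' => (M t ω' - M (t - 1) ω') ^ 2 | ℱ (t - 1)]) ω

/-- The exponent `l (M_n - M_0) - (eˡ - 1 - l) V_n`, with `V` the predictable quadratic variation;
its exponential is Freedman's exponential supermartingale. -/
noncomputable def freedmanExponent (M : ℕ → Ω → ℝ) (ℱ : Filtration ℕ m0) (μ : Measure Ω)
    (l : ℝ) (n : ℕ) (ω : Ω) : ℝ :=
  l * (M n ω - M 0 ω) - expRemainder l * predictableQuadVar M ℱ μ n ω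

theorem predictableQuadVar_succ (n : ℕ) (ω : Ω) :
    predictableQuadVar M ℱ μ (n + 1) ω =
      predictableQuadVar M ℱ μ n ω + (μ[fun ω' => (M (n + 1) ω' - M n ω') ^ 2 | ℱ n]) ω := by
  simp [predictableQuadVar, Finset.sum_Icc_succ_top]

theorem predictableQuadVar_nonneg (n : ℕ) : ∀ᵐ ω ∂μ, 0 ≤ predictableQuadVar M ℱ μ n ω := by
  have hterm (t : ℕ) : ∀ᵐ ω ∂μ, 0 ≤ (μ[fun ω' => (M t ω' - M (t - 1) ω') ^ 2 | ℱ (t - 1)]) ω :=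
    condExp_nonneg (.of_forall fun _ => sq_nonneg _)
  filter_upwards [ae_all_iff.2 hterm] with ω hω using Finset.sum_nonneg fun t _ => hω t

theorem stronglyAdapted_predictableQuadVar : StronglyAdapted ℱ (predictableQuadVar M ℱ μ) :=
  fun _ => Finset.stronglyMeasurable_fun_sum _ fun _ ht =>
    stronglyMeasurable_condExp.mono (ℱ.mono ((Nat.sub_le _ _).trans (Finset.mem_Icc.1 ht).2))

theorem freedmanExponent_zero (ω : Ω) : freedmanExponent M ℱ μ l 0 ω = 0 := by
  simp [freedmanExponent, predictableQuadVar]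

theorem freedmanExponent_succ (n : ℕ) (ω : Ω) :
    freedmanExponent M ℱ μ l (n + 1) ω =
      (freedmanExponent M ℱ μ l n ω -
        expRemainder l * (μ[fun ω' => (M (n + 1) ω' - M n ω') ^ 2 | ℱ n]) ω) +
      l * (M (n + 1) ω - M n ω) := by
  rw [freedmanExponent, freedmanExponent, predictableQuadVar_succ]
  ring

theorem stronglyAdapted_freedmanExponent (hM : StronglyAdapted ℱ M) :
    StronglyAdapted ℱ (freedmanExponent M ℱ μ l) := fun n =>
  (((hM n).sub ((hM 0).mono (ℱ.mono n.zero_le))).const_mul l).sub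
    ((stronglyAdapted_predictableQuadVar n).const_mul (expRemainder l))

theorem ae_sub_zero_le_natCast (h_le : ∀ k < n, ∀ᵐ ω ∂μ, M (k + 1) ω - M k ω ≤ 1) :
    ∀ᵐ ω ∂μ, M n ω - M 0 ω ≤ n := by
  have h_all : ∀ᵐ ω ∂μ, ∀ k < n, M (k + 1) ω - M k ω ≤ 1 :=
    ae_all_iff.2 fun k => ae_all_iff.2 (h_le k)
  filter_upwards [h_all] with ω hω
  rw [← Finset.sum_range_sub (fun k => M k ω) n]
  simpa using Finset.sum_le_card_nsmul _ _ 1 fun k hk => hω k (Finset.mem_range.1 hk)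

theorem integrable_exp_freedmanExponent [IsFiniteMeasure μ] (hM : StronglyAdapted ℱ M)
    (hl : 0 ≤ l) (h_le : ∀ k < n, ∀ᵐ ω ∂μ, M (k + 1) ω - M k ω ≤ 1) :
    Integrable (fun ω => exp (freedmanExponent M ℱ μ l n ω)) μ := by
  have hbound : ∀ᵐ ω ∂μ, freedmanExponent M ℱ μ l n ω ≤ l * n := by
    filter_upwards [ae_sub_zero_le_natCast h_le, predictableQuadVar_nonneg n] with ω hM_le hV
    exact (sub_le_self _ (mul_nonneg (expRemainder_nonneg l) hV)).trans
      (mul_le_mul_of_nonneg_left hM_le hl)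
  simpa using integrable_exp_mul_of_le 1 (l * n) zero_le_one
    (((stronglyAdapted_freedmanExponent hM n).mono (ℱ.le n)).measurable.aemeasurable) hbound

theorem condExp_sub_nonpos_of_supermartingale_s15 [SigmaFiniteFiltration μ ℱ]
    (hM : Supermartingale M ℱ μ) (n : ℕ) : μ[fun ω => M (n + 1) ω - M n ω | ℱ n] ≤ᵐ[μ] 0 := by
  filter_upwards [condExp_sub (hM.integrable (n + 1)) (hM.integrable n) (ℱ n),
    hM.condExp_ae_le n.le_succ] with ω hsub hle
  rw [condExp_of_stronglyMeasurable (ℱ.le n) (hM.stronglyMeasurable n) (hM.integrable n)] at hsub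
  exact hsub.trans_le (sub_nonpos.2 hle)

theorem condExp_exp_freedmanExponent_succ_le [IsFiniteMeasure μ] (hM : Supermartingale M ℱ μ)
    (hl : 0 ≤ l) (h_sq : MemLp (fun ω => M (n + 1) ω - M n ω) 2 μ)
    (h_le : ∀ k < n + 1, ∀ᵐ ω ∂μ, M (k + 1) ω - M k ω ≤ 1) :
    μ[fun ω => exp (freedmanExponent M ℱ μ l (n + 1) ω) | ℱ n] ≤ᵐ[μ]
      fun ω => exp (freedmanExponent M ℱ μ l n ω) := by
  let A : Ω → ℝ := fun ω => exp (freedmanExponent M ℱ μ l n ω -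
    expRemainder l * (μ[fun ω' => (M (n + 1) ω' - M n ω') ^ 2 | ℱ n]) ω)
  let B : Ω → ℝ := fun ω => exp (l * (M (n + 1) ω - M n ω))
  have hfactor : (fun ω => exp (freedmanExponent M ℱ μ l (n + 1) ω)) = A * B := by
    ext ω
    rw [freedmanExponent_succ, exp_add]
    rfl
  have hA : StronglyMeasurable[ℱ n] A := continuous_exp.comp_stronglyMeasurable
    ((stronglyAdapted_freedmanExponent hM.stronglyAdapted n).sub
      (stronglyMeasurable_condExp.const_mul (expRemainder l)))
  have hAB : Integrable (A * B) μ :=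
    hfactor ▸ integrable_exp_freedmanExponent hM.stronglyAdapted hl h_le
  have hB : Integrable B μ :=
    integrable_exp_mul_of_le l 1 hl h_sq.1.aemeasurable (h_le n n.lt_succ_self)
  rw [hfactor]
  filter_upwards [condExp_mul_of_stronglyMeasurable_left hA hAB hB,
    condExp_exp_mul_le (ℱ.le n) hl h_sq (h_le n n.lt_succ_self)
      (condExp_sub_nonpos_of_supermartingale_s15 hM n)] with ω hpull hstep
  rw [hpull, Pi.mul_apply]
  refine (mul_le_mul_of_nonneg_left hstep (exp_pos _).le).trans_eq ?_
  rw [← exp_add, sub_add_cancel]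

theorem integral_exp_freedmanExponent_le [IsFiniteMeasure μ] (hM : Supermartingale M ℱ μ)
    (hl : 0 ≤ l) (h_sq : ∀ k < n, MemLp (fun ω => M (k + 1) ω - M k ω) 2 μ)
    (h_le : ∀ k < n, ∀ᵐ ω ∂μ, M (k + 1) ω - M k ω ≤ 1) :
    ∫ ω, exp (freedmanExponent M ℱ μ l n ω) ∂μ ≤ μ.real Set.univ := by
  induction n with
  | zero => simp [freedmanExponent_zero]
  | succ n ih =>
    have h_le' : ∀ k < n, ∀ᵐ ω ∂μ, M (k + 1) ω - M k ω ≤ 1 := fun k hk => h_le k (by lia)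
    rw [← integral_condExp (ℱ.le n)]
    exact (integral_mono_ae integrable_condExp
      (integrable_exp_freedmanExponent hM.stronglyAdapted hl h_le')
      (condExp_exp_freedmanExponent_succ_le hM hl (h_sq n n.lt_succ_self) h_le)).trans
      (ih (fun k hk => h_sq k (by lia)) h_le')

theorem measureReal_sub_ge_and_predictableQuadVar_le_le_exp [IsProbabilityMeasure μ]
    (hM : Supermartingale M ℱ μ) (hl : 0 ≤ l)
    (h_sq : ∀ k < n, MemLp (fun ω => M (k + 1) ω - M k ω) 2 μ)
    (h_le : ∀ k < n, ∀ᵐ ω ∂μ, M (k + 1) ω - M k ω ≤ 1) (v c : ℝ) :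
    μ.real {ω | c ≤ M n ω - M 0 ω ∧ predictableQuadVar M ℱ μ n ω ≤ v} ≤
      exp (expRemainder l * v - l * c) := by
  have hsub : {ω | c ≤ M n ω - M 0 ω ∧ predictableQuadVar M ℱ μ n ω ≤ v} ⊆
      {ω | l * c - expRemainder l * v ≤ freedmanExponent M ℱ μ l n ω} := fun ω hω =>
    sub_le_sub (mul_le_mul_of_nonneg_left hω.1 hl)
      (mul_le_mul_of_nonneg_left hω.2 (expRemainder_nonneg l))
  have hmgf : mgf (freedmanExponent M ℱ μ l n) μ 1 ≤ 1 := by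
    simpa [mgf] using integral_exp_freedmanExponent_le hM hl h_sq h_le
  calc
    _ ≤ μ.real {ω | l * c - expRemainder l * v ≤ freedmanExponent M ℱ μ l n ω} :=
      measureReal_mono hsub
    _ ≤ exp (-1 * (l * c - expRemainder l * v)) * mgf (freedmanExponent M ℱ μ l n) μ 1 :=
      measure_ge_le_exp_mul_mgf _ zero_le_one
        (by simpa using integrable_exp_freedmanExponent hM.stronglyAdapted hl h_le)
    _ ≤ exp (-1 * (l * c - expRemainder l * v)) := mul_le_of_le_one_right (exp_pos _).le hmgf
    _ = exp (expRemainder l * v - l * c) := by congr 1; ring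

end QuadVar

theorem freedman_inequality_general {Ω : Type*} {m0 : MeasurableSpace Ω} {μ : Measure Ω}
    [IsProbabilityMeasure μ] {ℱ : Filtration ℕ m0} {T : ℕ} {M : ℕ → Ω → ℝ}
    (hM : Supermartingale M ℱ μ)
    (h_sq : ∀ n < T, MemLp (fun ω => M (n + 1) ω - M n ω) 2 μ)
    (h_le : ∀ n < T, ∀ᵐ ω ∂μ, M (n + 1) ω - M n ω ≤ 1)
    {v c : ℝ} (hv : 0 < v) (hc : 0 ≤ c) :
    μ {ω | c ≤ M T ω - M 0 ω ∧ predictableQuadVar M ℱ μ T ω ≤ v} ≤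
      ENNReal.ofReal ((v / (v + c)) ^ (v + c) * exp c) := by
  have hl : 0 ≤ log ((v + c) / v) := log_nonneg ((one_le_div hv).2 (le_add_of_nonneg_right hc))
  rw [← ofReal_measureReal, ← exp_expRemainder_log_mul_sub hv (by positivity)]
  exact ENNReal.ofReal_le_ofReal
    (measureReal_sub_ge_and_predictableQuadVar_le_le_exp hM hl h_sq h_le v c)

/-- **Freedman's inequality, a.s.-bounded-variance form.** For a
real-valued martingale `(M_t)_{t=0,…,T}` with increments bounded by `1` in absolute
value and total conditional variance at most `v` almost surely, one has
`P[M_T − M_0 ≥ c] ≤ (v/(v+c))^(v+c)·exp c` for every `c > 0`. -/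
theorem freedman_inequality
    {Ω : Type*} {m0 : MeasurableSpace Ω} {μ : Measure Ω} [IsProbabilityMeasure μ]
    (ℱ : Filtration ℕ m0) (T : ℕ)
    (M : ℕ → Ω → ℝ) (hmart : Martingale M ℱ μ)
    (hdiff : ∀ t, 1 ≤ t → t ≤ T → ∀ᵐ ω ∂μ, |M t ω - M (t - 1) ω| ≤ 1)
    (v : ℝ) (hv : 0 < v)
    (hvar : ∀ᵐ ω ∂μ,
      ∑ t ∈ Finset.Icc 1 T,
        (μ[fun ω' => (M t ω' - M (t - 1) ω') ^ 2 | ℱ (t - 1)]) ω ≤ v)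
    (c : ℝ) (hc : 0 < c) :
    μ {ω | c ≤ M T ω - M 0 ω} ≤
      ENNReal.ofReal ((v / (v + c)) ^ (v + c) * Real.exp c) := by
  have habs (n : ℕ) (hn : n < T) : ∀ᵐ ω ∂μ, |M (n + 1) ω - M n ω| ≤ 1 :=
    hdiff (n + 1) n.succ_pos hn
  have h_sq (n : ℕ) (hn : n < T) : MemLp (fun ω => M (n + 1) ω - M n ω) 2 μ :=
    .of_bound ((hmart.integrable (n + 1)).sub (hmart.integrable n)).1 1 (habs n hn)
  have h_le (n : ℕ) (hn : n < T) : ∀ᵐ ω ∂μ, M (n + 1) ω - M n ω ≤ 1 :=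
    (habs n hn).mono fun _ => le_of_abs_le
  calc
    _ ≤ μ {ω | c ≤ M T ω - M 0 ω ∧ predictableQuadVar M ℱ μ T ω ≤ v} :=
      measure_mono_ae (hvar.mono fun _ hV hcM => ⟨hcM, hV⟩)
    _ ≤ _ := freedman_inequality_general hmart.supermartingale h_sq h_le hv hc.le
end
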